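/- arXiv:1402.6881 — 8 statements merged into one kernel-verified Lean document; each statement's English description precedes it below -/
import Mathlib

section
/- Let k be a field of characteristic 0 containing a primitive p^{n+1}-th root of unity (p a prime, n ≥ 1), let K be an algebraic closure of k and Γ = Gal(K/k) its group of k-algebra automorphisms. Let H be a finite group of cardinality p^n and Z a subgroup of H which is cyclic of order p and is contained both in the center of H and in the commutator subgroup of H. Then for every Γ-equivariant central extension (E, φ, j, π) of H by Kˣ, there exists a group homomorphism s : Z → E such that π(s(z)) = z for all z ∈ Z and such that s takes values in the Γ-fixed points: φ(γ)(s(z)) = s(z) for all γ ∈ Γ and z ∈ Z. (This says the pullback of the extension to Z splits equivariantly; it is the key lemma 'lem morph brauer nul' stating that the natural map Ext^c_k(H, G_m) → Ext^c_k(Z, G_m) is zero.) -/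
/-!
Let `Z` be generated by `g`. Since `Z ≤ [H, H]`, `g` lifts to some `e ∈ [E, E]`. An automorphism of
`E` over `H` changes elements only by central ones, hence fixes all commutators, so `e` is
`Γ`-fixed. The transfer `E → Z(E)` is `x ↦ x ^ [E : Z(E)]` and kills commutators, so
`e ^ |H| = 1`. Consequently `e ^ |Z|`, which lies in `Kˣ`, is an `|H|`-th root of unity, and it has
a `|Z|`-th root `b` among the `|H||Z|`-th roots of unity, which lie in `k`. The element `e * b⁻¹` is
then a `Γ`-fixed lift of `g` of order dividing `|Z|`.
-/

open Subgroup

section Commutator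

variable {G H : Type*} [Group G] [Group H]

open scoped commutatorElement in
theorem commutatorElement_central_mul_central_mul {c d : G} (hc : c ∈ center G)
    (hd : d ∈ center G) (a b : G) : ⁅c * a, d * b⁆ = ⁅a, b⁆ := by
  have c_comm (x : G) : ⁅c, x⁆ = 1 :=
    commutatorElement_eq_one_iff_mul_comm.mpr (mem_center_iff.mp hc x).symm
  have comm_d (x : G) : ⁅x, d⁆ = 1 :=
    commutatorElement_eq_one_iff_mul_comm.mpr (mem_center_iff.mp hd x)
  rw [commutatorElement_mul_left_eq_conj_mul, c_comm, mul_one, ← mem_center_iff.mp hc,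
    mul_inv_cancel_right, commutatorElement_mul_right_eq_mul_conj, comm_d, one_mul,
    ← mem_center_iff.mp hd, mul_inv_cancel_right]

open scoped commutatorElement in
theorem commutator_le_eqLocus_of_div_mem_center {f₁ f₂ : G →* H}
    (h : ∀ x, f₁ x / f₂ x ∈ center H) : commutator G ≤ f₁.eqLocus f₂ := by
  refine commutator_le.mpr fun a _ b _ ↦ ?_
  change f₁ ⁅a, b⁆ = f₂ ⁅a, b⁆
  rw [map_commutatorElement, map_commutatorElement,
    ← commutatorElement_central_mul_central_mul (h a) (h b) (f₂ a) (f₂ b),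
    div_mul_cancel, div_mul_cancel]

open scoped IsMulCommutative in
theorem pow_index_center_eq_one_of_mem_commutator [(center G).FiniteIndex] {x : G}
    (hx : x ∈ commutator G) : x ^ (center G).index = 1 :=
  congrArg Subtype.val
    (Abelianization.commutator_subset_ker (MonoidHom.transferCenterPow G) hx)

theorem pow_card_eq_one_of_mem_commutator [Finite H] {π : G →* H} (hπ : π.ker ≤ center G) {x : G}
    (hx : x ∈ commutator G) : x ^ Nat.card H = 1 := by
  have index_dvd : (center G).index ∣ Nat.card H :=
    (index_dvd_of_le hπ).trans (index_ker π ▸ card_subgroup_dvd_card π.range)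
  have : (center G).FiniteIndex := ⟨ne_zero_of_dvd_ne_zero Nat.card_pos.ne' index_dvd⟩
  exact orderOf_dvd_iff_pow_eq_one.mp <|
    (orderOf_dvd_of_pow_eq_one (pow_index_center_eq_one_of_mem_commutator hx)).trans index_dvd

theorem map_commutator_of_surjective {π : G →* H} (hπ : Function.Surjective π) :
    (commutator G).map π = commutator H := by
  rw [map_commutator_eq, MonoidHom.range_eq_top.mpr hπ, commutator_def]

end Commutator

section FixedSubgroup

variable {Γ E : Type*} [Group Γ] [Group E]

/-- The subgroup `E ^ Γ` of fixed points of an action of `Γ` on `E` by automorphisms. The action is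
given by a homomorphism to `MulAut E` instead of a `MulDistribMulAction` instance. -/
def fixedSubgroup (φ : Γ →* MulAut E) : Subgroup E :=
  ⨅ γ, (φ γ).toMonoidHom.eqLocus (MonoidHom.id E)

theorem mem_fixedSubgroup {φ : Γ →* MulAut E} {e : E} :
    e ∈ fixedSubgroup φ ↔ ∀ γ, φ γ e = e :=
  mem_iInf

theorem commutator_le_fixedSubgroup {H : Type*} [Group H] {φ : Γ →* MulAut E} {π : E →* H}
    (hker : π.ker ≤ center E) (hπφ : ∀ γ e, π (φ γ e) = π e) :
    commutator E ≤ fixedSubgroup φ := by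
  refine le_iInf fun γ ↦ commutator_le_eqLocus_of_div_mem_center fun e ↦ hker ?_
  simp [MonoidHom.mem_ker, hπφ]

end FixedSubgroup

section Splitting

variable {E H : Type*} [Group E] [Group H]

theorem exists_lift_of_pow_card_eq_one {C : Type*} [Group C] {π : E →* H} {ι : C →* H} {g : C}
    (hg : ∀ c, c ∈ zpowers g) {e : E} (he : π e = ι g) (hpow : e ^ Nat.card C = 1) :
    ∃ s : C →* E, π.comp s = ι := by
  have order_dvd : orderOf e ∣ orderOf g :=
    orderOf_eq_card_of_forall_mem_zpowers hg ▸ orderOf_dvd_of_pow_eq_one hpow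
  refine ⟨monoidHomOfForallMemZpowers hg order_dvd, ?_⟩
  rw [MonoidHom.eq_iff_eq_on_generator hg, MonoidHom.comp_apply,
    monoidHomOfForallMemZpowers_apply_gen, he]

theorem exists_section_mem_of_le_commutator [Finite H] {π : E →* H} (hπ : Function.Surjective π)
    (hker : π.ker ≤ center E) {Z : Subgroup H} [IsCyclic Z] (hZ : Z ≤ commutator H)
    {F : Subgroup E} (hF : commutator E ≤ F)
    (hroot : ∀ a ∈ π.ker, a ^ Nat.card H = 1 → ∃ b ∈ π.ker ⊓ F, b ^ Nat.card Z = a) :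
    ∃ s : Z →* E, (∀ z, π (s z) = z) ∧ ∀ z, s z ∈ F := by
  obtain ⟨g, hg⟩ := IsCyclic.exists_generator (α := Z)
  obtain ⟨e, he, hπe⟩ : (g : H) ∈ (commutator E).map π := map_commutator_of_surjective hπ ▸ hZ g.2
  have pow_mem_ker : e ^ Nat.card Z ∈ π.ker := by
    rw [MonoidHom.mem_ker, map_pow, hπe, ← coe_pow, pow_card_eq_one', coe_one]
  have pow_torsion : (e ^ Nat.card Z) ^ Nat.card H = 1 := by
    rw [pow_right_comm, pow_card_eq_one_of_mem_commutator hker he, one_pow]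
  obtain ⟨b, ⟨hbker, hbF⟩, hb⟩ := hroot _ pow_mem_ker pow_torsion
  let e' : F := ⟨e * b⁻¹, F.mul_mem (hF he) (F.inv_mem hbF)⟩
  have lift_e' : (π.comp F.subtype) e' = Z.subtype g := by
    simp [e', hπe, MonoidHom.mem_ker.mp hbker]
  have e'_pow : e' ^ Nat.card Z = 1 := by
    have hcomm : Commute e b⁻¹ := Commute.inv_right (mem_center_iff.mp (hker hbker) e)
    ext
    rw [coe_pow, hcomm.mul_pow, inv_pow, hb, mul_inv_cancel, coe_one]
  obtain ⟨s, hs⟩ := exists_lift_of_pow_card_eq_one hg lift_e' e'_pow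
  exact ⟨F.subtype.comp s, DFunLike.congr_fun hs, fun z ↦ (s z).2⟩

end Splitting

theorem exists_units_map_pow_eq_of_pow_eq_one {R S : Type*} [CommRing R] [CommRing S] [IsDomain S]
    [Algebra R S] [FaithfulSMul R S] {m d : ℕ} [NeZero m] [NeZero d] {ζ : R}
    (hζ : IsPrimitiveRoot ζ (m * d)) {x : Sˣ} (hx : x ^ m = 1) :
    ∃ y : Rˣ, Units.map (algebraMap R S : R →* S) y ^ d = x := by
  have hmd : m * d ≠ 0 := NeZero.ne _
  have hζS : IsPrimitiveRoot (algebraMap R S ζ) (m * d) :=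
    hζ.map_of_injective (FaithfulSMul.algebraMap_injective R S)
  obtain ⟨i, -, hi⟩ := (hζS.pow hmd.bot_lt (mul_comm m d)).eq_pow_of_pow_eq_one
    (ξ := (x : S)) (by rw [← Units.val_pow_eq_pow_val, hx, Units.val_one])
  refine ⟨(hζ.isUnit hmd).unit ^ i, Units.ext ?_⟩
  simpa [pow_right_comm] using hi

theorem extension_splits_equivariantly_over_central_cyclic_general
    {k K H E : Type*} [CommRing k] [CommRing K] [IsDomain K] [Algebra k K] [FaithfulSMul k K]
    [Group H] [Finite H] [Group E] {Z : Subgroup H} [IsCyclic Z] (hZ : Z ≤ commutator H)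
    {ζ : k} (hζ : IsPrimitiveRoot ζ (Nat.card H * Nat.card Z))
    {φ : (K ≃ₐ[k] K) →* MulAut E} {j : Kˣ →* E} (hj : Function.Injective j)
    (hjcenter : ∀ x, j x ∈ center E)
    (hjequiv : ∀ (γ : K ≃ₐ[k] K) (x : Kˣ), φ γ (j x) = j (Units.map (γ : K →* K) x))
    {π : E →* H} (hπ : Function.Surjective π) (hker : π.ker = j.range)
    (hπequiv : ∀ γ e, π (φ γ e) = π e) :
    ∃ s : Z →* E, (∀ z, π (s z) = z) ∧ ∀ γ z, φ γ (s z) = s z := by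
  have ker_le_center : π.ker ≤ center E := by
    rintro _ he
    obtain ⟨x, rfl⟩ := hker ▸ he
    exact hjcenter x
  have fixed_units (y : kˣ) : j (Units.map (algebraMap k K : k →* K) y) ∈ fixedSubgroup φ :=
    mem_fixedSubgroup.mpr fun γ ↦ by
      rw [hjequiv]
      exact congrArg j (Units.ext (γ.commutes y))
  obtain ⟨s, hπs, hs⟩ := exists_section_mem_of_le_commutator hπ ker_le_center hZ
    (commutator_le_fixedSubgroup ker_le_center hπequiv) fun a ha ha_pow ↦ by
      obtain ⟨x, rfl⟩ := hker ▸ ha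
      have hx : x ^ Nat.card H = 1 := hj (by rw [map_pow, ha_pow, map_one])
      obtain ⟨y, rfl⟩ := exists_units_map_pow_eq_of_pow_eq_one hζ hx
      exact ⟨_, ⟨hker ▸ ⟨_, rfl⟩, fixed_units y⟩, (map_pow j _ _).symm⟩
  exact ⟨s, hπs, fun γ z ↦ mem_fixedSubgroup.mp (hs z) γ⟩

/-- Key lemma: for `H` a finite group of order `p^n` and `Z ≤ Z(H) ∩ [H,H]` cyclic of
order `p`, over a field `k` of characteristic zero containing the `p^(n+1)`-th roots of
unity, every `Gal(K/k)`-equivariant central extension of `H` by `Kˣ` splits equivariantly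
over `Z`; i.e. the map `Ext^c_k(H, G_m) → Ext^c_k(Z, G_m)` is zero. -/
theorem extension_splits_equivariantly_over_central_cyclic
    (p : ℕ) (hp : p.Prime) (n : ℕ) (hn : 1 ≤ n)
    (k : Type*) [Field k] [CharZero k]
    (ζ : k) (hζ : IsPrimitiveRoot ζ (p ^ (n + 1)))
    (K : Type*) [Field K] [Algebra k K] [IsAlgClosure k K]
    (H : Type*) [Group H] (hH : Nat.card H = p ^ n)
    (Z : Subgroup H) (hZcyc : IsCyclic Z) (hZcard : Nat.card Z = p)
    (hZcenter : Z ≤ Subgroup.center H) (hZcomm : (Z : Subgroup H) ≤ commutator H)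
    (E : Type*) [Group E]
    (φ : (K ≃ₐ[k] K) →* MulAut E)
    (j : Kˣ →* E) (hj : Function.Injective j)
    (hjcenter : ∀ x : Kˣ, j x ∈ Subgroup.center E)
    (hjequiv : ∀ (γ : K ≃ₐ[k] K) (x : Kˣ), φ γ (j x) = j (Units.map (γ : K →* K) x))
    (π : E →* H) (hπ : Function.Surjective π)
    (hker : π.ker = j.range)
    (hπequiv : ∀ (γ : K ≃ₐ[k] K) (e : E), π (φ γ e) = π e) :
    ∃ s : Z →* E, (∀ z : Z, π (s z) = (z : H)) ∧
      ∀ (γ : K ≃ₐ[k] K) (z : Z), φ γ (s z) = s z := by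
  have : Finite H := Nat.finite_of_card_ne_zero (hH ▸ pow_ne_zero n hp.ne_zero)
  exact extension_splits_equivariantly_over_central_cyclic_general hZcomm
    (by rwa [hH, hZcard, ← pow_succ]) hj hjcenter hjequiv hπ hker hπequiv
end

section
/- Let k be a number field, K an algebraic closure of k and Γ = Gal(K/k) its group of k-algebra automorphisms. Let H = Q₈ be the quaternion group of order 8 and Z its center (which is cyclic of order 2). Then for every Γ-equivariant central extension (E, φ, j, π) of H by Kˣ, there exists a group homomorphism s : Z → E such that π(s(z)) = z for all z ∈ Z and such that φ(γ)(s(z)) = s(z) for all γ ∈ Γ and z ∈ Z. (This is the statement that the natural map Ext^c_k(Q₈, G_m) → Ext^c_k(Z, G_m) is the zero morphism.) -/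
/-!
In a central extension `π : E → G` the commutator `⁅u, v⁆` depends only on `π u` and `π v`, so
commutators are canonical lifts: every endomorphism of `E` over `G` fixes them. If `x, y : G`
satisfy `x ^ 2 = y ^ 2 = ⁅x, y⁆`, like `i, j` in `Q₈`, and `u, v` lift them, then `u ^ 2` may be
replaced by `⁅u, v⁆` or `v ^ 2` inside any commutator. Hence `⁅u, v⁆` commutes with `u`, and
`⁅u, v⁆ ^ 2 = ⁅u ^ 2, v⁆ = ⁅v ^ 2, v⁆ = 1`. In `Q₈` the element `⁅i, j⁆ = -1` generates the center,
and `-1 ↦ ⁅u, v⁆` is the section. The pair `a m`, `xa 0` plays the role of `i`, `j` in every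
generalized quaternion group `QuaternionGroup (2 * m)`.
-/

open Subgroup QuaternionGroup
open scoped commutatorElement

section CentralExtension

variable {E G : Type*} [Group E] [Group G] {π : E →* G}

theorem exists_mem_center_eq_mul_of_map_eq (hker : π.ker ≤ center E) {u u' : E}
    (h : π u = π u') : ∃ z ∈ center E, u = u' * z :=
  ⟨u'⁻¹ * u, hker <| (MonoidHom.eq_iff π).mp h, (mul_inv_cancel_left u' u).symm⟩

theorem commutatorElement_eq_of_map_eq (hker : π.ker ≤ center E) {u u' v v' : E}
    (hu : π u = π u') (hv : π v = π v') : ⁅u, v⁆ = ⁅u', v'⁆ := by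
  obtain ⟨y, hy, rfl⟩ := exists_mem_center_eq_mul_of_map_eq hker hu
  obtain ⟨z, hz, rfl⟩ := exists_mem_center_eq_mul_of_map_eq hker hv
  have hy_left (g : E) : ⁅y, g⁆ = 1 :=
    commutatorElement_eq_one_iff_mul_comm.mpr (mem_center_iff.mp hy g).symm
  have hz_right (g : E) : ⁅g, z⁆ = 1 :=
    commutatorElement_eq_one_iff_mul_comm.mpr (mem_center_iff.mp hz g)
  simp only [commutatorElement_mul_left_eq_conj_mul, commutatorElement_mul_right_eq_mul_conj,
    hy_left, hz_right, mul_one, mul_inv_cancel, one_mul, mul_inv_cancel_right]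

theorem map_commutatorElement_eq_self (hker : π.ker ≤ center E) {f : E →* E}
    (hf : ∀ e, π (f e) = π e) (u v : E) : f ⁅u, v⁆ = ⁅u, v⁆ := by
  rw [map_commutatorElement]
  exact commutatorElement_eq_of_map_eq hker (hf u) (hf v)

theorem commutatorElement_sq_left_of_commute {u v : E} (h : Commute u ⁅u, v⁆) :
    ⁅u ^ 2, v⁆ = ⁅u, v⁆ ^ 2 := by
  rw [sq, sq, commutatorElement_mul_left_eq_conj_mul, h.eq, mul_inv_cancel_right]

theorem commutatorElement_sq_eq_one_of_map_sq_eq (hker : π.ker ≤ center E) {u v : E}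
    (hu : π u ^ 2 = ⁅π u, π v⁆) (hv : π v ^ 2 = ⁅π u, π v⁆) : ⁅u, v⁆ ^ 2 = 1 := by
  have hcomm : Commute u ⁅u, v⁆ := commutatorElement_eq_one_iff_commute.mp <| calc
    ⁅u, ⁅u, v⁆⁆ = ⁅u, u ^ 2⁆ := commutatorElement_eq_of_map_eq hker rfl <| by
      rw [map_commutatorElement, map_pow, hu]
    _ = 1 := ((Commute.refl u).pow_right 2).commutator_eq
  calc
    ⁅u, v⁆ ^ 2 = ⁅u ^ 2, v⁆ := (commutatorElement_sq_left_of_commute hcomm).symm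
    _ = ⁅v ^ 2, v⁆ := commutatorElement_eq_of_map_eq hker (by rw [map_pow, map_pow, hu, hv]) rfl
    _ = 1 := ((Commute.refl v).pow_left 2).commutator_eq

theorem exists_section_zpowers {z : G} {c : E} (hc : π c = z) (horder : orderOf c ∣ orderOf z) :
    ∃ s : zpowers z →* E, (∀ w, π (s w) = w) ∧
      ∀ f : E →* E, f c = c → ∀ w, f (s w) = s w := by
  let g : zpowers z := ⟨z, mem_zpowers z⟩
  have hg (w : zpowers z) : w ∈ zpowers g := by
    obtain ⟨_, n, rfl⟩ := w
    exact ⟨n, rfl⟩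
  have horder_g : orderOf c ∣ orderOf g := by rwa [orderOf_mk]
  let s : zpowers z →* E := monoidHomOfForallMemZpowers hg horder_g
  have hs : s g = c := monoidHomOfForallMemZpowers_apply_gen hg horder_g
  have hsection : π.comp s = (zpowers z).subtype :=
    (MonoidHom.eq_iff_eq_on_generator hg _ _).mpr (by simp [hs, hc, g])
  have hinvariant (f : E →* E) (hf : f c = c) : f.comp s = s :=
    (MonoidHom.eq_iff_eq_on_generator hg _ _).mpr (by simp [hs, hf])
  exact ⟨s, DFunLike.congr_fun hsection, fun f hf => DFunLike.congr_fun (hinvariant f hf)⟩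

theorem exists_invariant_section_zpowers_of_sq_eq_commutatorElement
    (hπ : Function.Surjective π) (hker : π.ker ≤ center E) {x y z : G} (hx : x ^ 2 = z)
    (hy : y ^ 2 = z) (hxy : ⁅x, y⁆ = z) (hz : z ≠ 1) :
    ∃ s : zpowers z →* E, (∀ w, π (s w) = w) ∧
      ∀ f : E →* E, (∀ e, π (f e) = π e) → ∀ w, f (s w) = s w := by
  obtain ⟨u, rfl⟩ := hπ x
  obtain ⟨v, rfl⟩ := hπ y
  have hc : π ⁅u, v⁆ = z := by rw [map_commutatorElement, hxy]
  have hc_sq : ⁅u, v⁆ ^ 2 = 1 :=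
    commutatorElement_sq_eq_one_of_map_sq_eq hker (hx.trans hxy.symm) (hy.trans hxy.symm)
  have hz_sq : z ^ 2 = 1 := by rw [← hc, ← map_pow, hc_sq, map_one]
  have horder : orderOf ⁅u, v⁆ ∣ orderOf z := by
    rw [orderOf_eq_prime hz_sq hz]
    exact orderOf_dvd_of_pow_eq_one hc_sq
  obtain ⟨s, hs, hinvariant⟩ := exists_section_zpowers hc horder
  exact ⟨s, hs, fun f hf => hinvariant f (map_commutatorElement_eq_self hker hf u v)⟩

end CentralExtension

section QuaternionGroup

variable {n : ℕ}

theorem quaternionGroup_a_sq (i : ZMod (2 * n)) : a i ^ 2 = a (2 * i) := by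
  rw [sq, a_mul_a, two_mul i]

theorem quaternionGroup_commutatorElement_a_xa (i j : ZMod (2 * n)) : ⁅a i, xa j⁆ = a (2 * i) := by
  rw [commutatorElement_def, mul_inv_eq_iff_eq_mul, mul_inv_eq_iff_eq_mul, mul_assoc, xa_mul_a,
    a_mul_xa, a_mul_xa]
  ring_nf

theorem quaternionGroup_a_natCast_ne_one [NeZero n] : (a n : QuaternionGroup n) ≠ 1 := by
  rw [← xa_sq 0]
  exact pow_ne_one_of_lt_orderOf two_ne_zero (by rw [orderOf_xa]; decide)

theorem center_quaternionGroup_le_zpowers [NeZero n] (hn : n ≠ 1) :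
    center (QuaternionGroup n) ≤ zpowers (a n) := by
  rintro (i | i) hi
  · have hneg : i = -i := by simpa using mem_center_iff.mp hi (xa 0)
    rcases (ZMod.neg_eq_self_iff i).mp hneg.symm with rfl | hval
    · exact one_mem _
    · have hi_eq : i = n := by
        rw [← ZMod.natCast_zmod_val i, Nat.eq_of_mul_eq_mul_left two_pos hval]
      exact hi_eq ▸ mem_zpowers _
  · have htwo : (2 : ZMod (2 * n)) = 0 := by
      have h : i - 1 = i + 1 := by simpa using mem_center_iff.mp hi (a 1)
      linear_combination -h
    have hdvd : 2 * n ∣ 2 * 1 := (ZMod.natCast_eq_zero_iff 2 (2 * n)).mp htwo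
    exact absurd (Nat.dvd_one.mp (Nat.dvd_of_mul_dvd_mul_left two_pos hdvd)) hn

theorem quaternionGroup_a_natCast_mem_center : (a n : QuaternionGroup n) ∈ center _ := by
  have hneg : -(n : ZMod (2 * n)) = n := by
    have h : ((2 * n : ℕ) : ZMod (2 * n)) = 0 := ZMod.natCast_self _
    push_cast at h
    linear_combination -h
  rw [mem_center_iff]
  rintro (i | i)
  · rw [a_mul_a, a_mul_a, add_comm]
  · rw [a_mul_xa, xa_mul_a, sub_eq_add_neg, hneg]

theorem center_quaternionGroup_eq_zpowers [NeZero n] (hn : n ≠ 1) :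
    center (QuaternionGroup n) = zpowers (a n) :=
  (center_quaternionGroup_le_zpowers hn).antisymm <|
    zpowers_le.mpr quaternionGroup_a_natCast_mem_center

end QuaternionGroup

theorem quaternion_extension_splits_equivariantly_over_center_general {n : ℕ} [NeZero n]
    (hn : Even n) {E : Type*} [Group E] {π : E →* QuaternionGroup n}
    (hπ : Function.Surjective π) (hker : π.ker ≤ center E) :
    ∃ s : center (QuaternionGroup n) →* E, (∀ z, π (s z) = z) ∧
      ∀ f : E →* E, (∀ e, π (f e) = π e) → ∀ z, f (s z) = s z := by
  have hn_ne_one : n ≠ 1 := fun h => Nat.not_even_one (h ▸ hn)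
  obtain ⟨m, hm⟩ := even_iff_two_dvd.mp hn
  have hcast : (2 * m : ZMod (2 * n)) = n := by exact_mod_cast congrArg Nat.cast hm.symm
  have ha_sq : (a m : QuaternionGroup n) ^ 2 = a n := by rw [quaternionGroup_a_sq, hcast]
  have hcommutator : ⁅(a m : QuaternionGroup n), (xa 0 : QuaternionGroup n)⁆ = a n := by
    rw [quaternionGroup_commutatorElement_a_xa, hcast]
  rw [center_quaternionGroup_eq_zpowers hn_ne_one]
  exact exists_invariant_section_zpowers_of_sq_eq_commutatorElement hπ hker ha_sq (xa_sq 0)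
    hcommutator quaternionGroup_a_natCast_ne_one

/-- For `H = Q₈` the quaternion group of order 8 with center `Z`, over a number field `k`
with algebraic closure `K` and `Γ = Gal(K/k)`, every `Γ`-equivariant central extension of
`H` by `Kˣ` splits equivariantly over `Z`; i.e. the natural map
`Ext^c_k(Q₈, G_m) → Ext^c_k(Z, G_m)` is the zero morphism. -/
theorem quaternion_extension_splits_equivariantly_over_center
    (k : Type*) [Field k] [NumberField k]
    (K : Type*) [Field K] [Algebra k K] [IsAlgClosure k K]
    (E : Type*) [Group E]
    (φ : (K ≃ₐ[k] K) →* MulAut E)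
    (j : Kˣ →* E) (hj : Function.Injective j)
    (hjcenter : ∀ x : Kˣ, j x ∈ Subgroup.center E)
    (hjequiv : ∀ (γ : K ≃ₐ[k] K) (x : Kˣ), φ γ (j x) = j (Units.map (γ : K →* K) x))
    (π : E →* QuaternionGroup 2) (hπ : Function.Surjective π)
    (hker : π.ker = j.range)
    (hπequiv : ∀ (γ : K ≃ₐ[k] K) (e : E), π (φ γ e) = π e) :
    ∃ s : (Subgroup.center (QuaternionGroup 2)) →* E,
      (∀ z : Subgroup.center (QuaternionGroup 2), π (s z) = (z : QuaternionGroup 2)) ∧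
      ∀ (γ : K ≃ₐ[k] K) (z : Subgroup.center (QuaternionGroup 2)), φ γ (s z) = s z := by
  obtain ⟨s, hs, hinvariant⟩ := quaternion_extension_splits_equivariantly_over_center_general
    even_two hπ (hker.trans_le (by rintro _ ⟨x, rfl⟩; exact hjcenter x))
  exact ⟨s, hs, fun γ => hinvariant (φ γ) (hπequiv γ)⟩
end

section
/- Let H be a finite group of cardinality n, let E be a group and π : E → H a surjective group homomorphism whose kernel A = ker π is contained in the center of E. Assume A is n-divisible: for every a ∈ A there exists b ∈ A with bⁿ = a. Then there exists a subgroup E' of E such that π maps E' onto all of H and E' ∩ A equals the n-torsion subgroup {a ∈ A : aⁿ = 1} of A. (This expresses the surjectivity of Ext^c(H, μ_n) → Ext^c(H, G_m) used in the key lemma: every central extension of H by a divisible group is induced from a central extension by the n-torsion subgroup.) -/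
/-!
Put `n = |H|`. The index of the center of `E` divides the index `n` of `A`, so by Schur's transfer
argument `e ↦ e ^ n` is an endomorphism of `E`, although `E` need not be abelian. Its kernel is the
required subgroup: it meets `A` in the `n`-torsion of `A`, and it surjects onto `H` because each
`e` can be corrected by a central `n`-th root of `e ^ n ∈ A`.
-/

section CenterFiniteIndex

variable {G : Type*} [Group G] [(Subgroup.center G).FiniteIndex] {n : ℕ}

theorem mul_pow_of_index_center_dvd (hn : (Subgroup.center G).index ∣ n) (g h : G) :
    (g * h) ^ n = g ^ n * h ^ n := by
  obtain ⟨k, rfl⟩ := hn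
  have mul_pow_index :
      (g * h) ^ (Subgroup.center G).index =
        g ^ (Subgroup.center G).index * h ^ (Subgroup.center G).index :=
    congrArg Subtype.val (map_mul (MonoidHom.transferCenterPow G) g h)
  have commute_pow_index :
      Commute (g ^ (Subgroup.center G).index) (h ^ (Subgroup.center G).index) :=
    (Subgroup.mem_center_iff.mp (MonoidHom.transferCenterPow G g).2 _).symm
  simp only [pow_mul, mul_pow_index, commute_pow_index.mul_pow]

/-- The `n`-th power map of a group whose center has finite index dividing `n`, as an endomorphism.
It serves to make `{g | g ^ n = 1}` a subgroup, namely its kernel. -/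
def powHomOfIndexCenterDvd (hn : (Subgroup.center G).index ∣ n) : G →* G where
  toFun g := g ^ n
  map_one' := one_pow n
  map_mul' := mul_pow_of_index_center_dvd hn

theorem mem_ker_powHomOfIndexCenterDvd (hn : (Subgroup.center G).index ∣ n) {g : G} :
    g ∈ (powHomOfIndexCenterDvd hn).ker ↔ g ^ n = 1 :=
  Iff.rfl

end CenterFiniteIndex

section Extension

variable {E H : Type*} [Group E] [Group H] {π : E →* H}

theorem index_center_dvd_card_of_ker_le_center (hcentral : π.ker ≤ Subgroup.center E) :
    (Subgroup.center E).index ∣ Nat.card H :=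
  calc
    (Subgroup.center E).index ∣ π.ker.index := Subgroup.index_dvd_of_le hcentral
    _ = Nat.card π.range := Subgroup.index_ker π
    _ ∣ Nat.card H := Subgroup.card_subgroup_dvd_card π.range

theorem pow_card_mem_ker (π : E →* H) (e : E) : e ^ Nat.card H ∈ π.ker := by
  rw [MonoidHom.mem_ker, map_pow, pow_card_eq_one']

theorem exists_pow_eq_one_and_map_eq {n : ℕ} (hcentral : π.ker ≤ Subgroup.center E) {e : E}
    (hroot : ∃ b ∈ π.ker, b ^ n = e ^ n) : ∃ e' : E, e' ^ n = 1 ∧ π e' = π e := by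
  obtain ⟨b, hb, hpow⟩ := hroot
  have commute_e_b : Commute e b := Subgroup.mem_center_iff.mp (hcentral hb) e
  refine ⟨e * b⁻¹, ?_, ?_⟩
  · rw [commute_e_b.inv_right.mul_pow, inv_pow, hpow, mul_inv_cancel]
  · rw [map_mul, map_inv, MonoidHom.mem_ker.mp hb, inv_one, mul_one]

end Extension

/-- Every central extension `1 → A → E → H → 1` of a finite group `H` of order `n` by an
`n`-divisible abelian group `A` is induced from a central extension by the `n`-torsion
subgroup of `A`: there is a subgroup `E'` of `E` surjecting onto `H` whose intersection
with `A` is exactly the `n`-torsion of `A`. -/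
theorem central_extension_by_divisible_reduces_to_torsion
    (H : Type*) [Group H] [Finite H] (n : ℕ) (hn : Nat.card H = n)
    (E : Type*) [Group E] (π : E →* H) (hπ : Function.Surjective π)
    (hcentral : π.ker ≤ Subgroup.center E)
    (hdiv : ∀ a ∈ π.ker, ∃ b ∈ π.ker, b ^ n = a) :
    ∃ E' : Subgroup E, (∀ h : H, ∃ e ∈ E', π e = h) ∧
      ∀ e : E, e ∈ E' ⊓ π.ker ↔ e ∈ π.ker ∧ e ^ n = 1 := by
  subst hn
  have : (Subgroup.center E).FiniteIndex := Subgroup.finiteIndex_of_le hcentral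
  have index_dvd : (Subgroup.center E).index ∣ Nat.card H :=
    index_center_dvd_card_of_ker_le_center hcentral
  refine ⟨(powHomOfIndexCenterDvd index_dvd).ker, fun h => ?_, fun e => ?_⟩
  · obtain ⟨e, rfl⟩ := hπ h
    exact exists_pow_eq_one_and_map_eq hcentral (hdiv _ (pow_card_mem_ker π e))
  · rw [Subgroup.mem_inf, mem_ker_powHomOfIndexCenterDvd, and_comm]
end

section
/- For every prime p, every n ≥ 1, and every injective additive group homomorphism f : ℤ/p^nℤ → ℤ/p^{n+1}ℤ, the induced map f_* : Ext¹_ℤ(ℤ/pℤ, ℤ/p^nℤ) → Ext¹_ℤ(ℤ/pℤ, ℤ/p^{n+1}ℤ) on first Ext groups of ℤ-modules is the zero map. -/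
open CategoryTheory

/-!
Since `Ext¹(R/r, N) = Hom(rR, N) / Hom(R, N)`, pushing forward along `f : N → N'` gives zero as soon
as `f` takes values in `r N'`: a map `rR → N` becomes, after composition with `f`, a map sending `r`
to some `r • z`, and it extends to `R` by `1 ↦ z`. Over `ℤ`, the elements of `ℤ/p^(n+1)` killed by
`p^n` are exactly the multiples of `p`, so every `f : ℤ/p^n → ℤ/p^(n+1)` takes values in
`p ℤ/p^(n+1)`.
-/

section HomologyMap

variable {C ι : Type*} [Category* C] [Limits.HasZeroMorphisms C] {c : ComplexShape ι}
  {K L : HomologicalComplex C c}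

theorem homologyMap_eq_zero_iff (φ : K ⟶ L) (i : ι) [K.HasHomology i] [L.HasHomology i] :
    HomologicalComplex.homologyMap φ i = 0 ↔ K.iCycles i ≫ φ.f i ≫ L.pOpcycles i = 0 := by
  rw [← cancel_mono (L.homologyι i), ← cancel_epi (K.homologyπ i),
    HomologicalComplex.homologyι_naturality, HomologicalComplex.homology_π_ι_assoc,
    HomologicalComplex.p_opcyclesMap, Limits.zero_comp, Limits.comp_zero]

end HomologyMap

section Resolution

variable {R C : Type*} [Ring R] [Category* C] [Abelian C] [Linear R C] [EnoughProjectives C]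
  {X Y Z : C}

theorem ext_succ_map_eq_zero_of_forall_exists_d_comp_eq (P : ProjectiveResolution X) (f : Y ⟶ Z)
    (n : ℕ)
    (hf : ∀ φ : P.complex.X (n + 1) ⟶ Y, P.complex.d (n + 2) (n + 1) ≫ φ = 0 →
      ∃ ψ : P.complex.X n ⟶ Z, P.complex.d (n + 1) n ≫ ψ = φ ≫ f) :
    ((Ext R C (n + 1)).obj (Opposite.op X)).map f = 0 := by
  let F (W : C) := ((linearYoneda R C).obj W).rightOp
  let K (W : C) := ((F W).mapHomologicalComplex _).obj P.complex
  let α : F Z ⟶ F Y := NatTrans.rightOp ((linearYoneda R C).map f)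
  let αP : K Z ⟶ K Y := (NatTrans.mapHomologicalComplex α _).app P.complex
  suffices hαP : (HomologicalComplex.homologyFunctor _ _ (n + 1)).map αP = 0 by
    have hα : (NatTrans.leftDerived α (n + 1)).app X = 0 := by
      rw [P.leftDerived_app_eq, hαP, Limits.zero_comp, Limits.comp_zero]
    exact congrArg Quiver.Hom.unop hα
  refine (homologyMap_eq_zero_iff αP (n + 1)).2 (Quiver.Hom.unop_inj ?_)
  ext x
  let φ : P.complex.X (n + 1) ⟶ Y := ((K Y).pOpcycles (n + 1)).unop.hom x
  have hφ : P.complex.d (n + 2) (n + 1) ≫ φ = 0 :=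
    congrArg (fun g ↦ g.unop.hom x) ((K Y).d_pOpcycles (n + 2) (n + 1))
  obtain ⟨ψ, hψ⟩ := hf φ hφ
  calc ((K Z).iCycles (n + 1)).unop.hom (φ ≫ f)
      = ((K Z).iCycles (n + 1)).unop.hom (P.complex.d (n + 1) n ≫ ψ) := by rw [hψ]
    _ = 0 := congrArg (fun g ↦ g.unop.hom ψ) ((K Z).iCycles_d (n + 1) n)

end Resolution

section ProjectiveModule

theorem exists_comp_eq_of_exact {R P A B C : Type*} [Ring R] [AddCommGroup P] [Module R P]
    [Module.Projective R P] [AddCommGroup A] [Module R A] [AddCommGroup B] [Module R B]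
    [AddCommGroup C] [Module R C] {d : A →ₗ[R] B} {π : B →ₗ[R] C} (hdπ : Function.Exact d π)
    {u : P →ₗ[R] B} (hu : π ∘ₗ u = 0) : ∃ h : P →ₗ[R] A, d ∘ₗ h = u := by
  have hu_range (y : P) : u y ∈ LinearMap.range d := (hdπ _).1 (LinearMap.congr_fun hu y)
  obtain ⟨h, hh⟩ := Module.projective_lifting_property d.rangeRestrict (u.codRestrict _ hu_range)
    d.surjective_rangeRestrict
  exact ⟨h, LinearMap.ext fun y ↦ congrArg Subtype.val (LinearMap.congr_fun hh y)⟩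

end ProjectiveModule

section CyclicModule

variable {R : Type*} [CommRing R] {r : R}

theorem exists_comp_eq_of_forall_eq_smul {P₁ P₀ M N : Type*}
    [AddCommGroup P₁] [Module R P₁] [AddCommGroup P₀] [Module R P₀] [Module.Projective R P₀]
    [AddCommGroup M] [Module R M] [AddCommGroup N] [Module R N]
    {d : P₁ →ₗ[R] P₀} {π : P₀ →ₗ[R] M} (hdπ : Function.Exact d π) (hπ : Function.Surjective π)
    {q : R →ₗ[R] M} (hq : Function.Surjective q) (hqr : LinearMap.ker q = Ideal.span {r})
    {g : P₁ →ₗ[R] N} (hg : LinearMap.ker d ≤ LinearMap.ker g) (hgr : ∀ x, ∃ z, g x = r • z) :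
    ∃ ψ : P₀ →ₗ[R] N, ψ ∘ₗ d = g := by
  have hq_iff (a : R) : q a = 0 ↔ r ∣ a := by
    rw [← LinearMap.mem_ker, hqr, Ideal.mem_span_singleton]
  -- Compare `P₁ → P₀ → M` with the presentation `R → R → M` given by `r` and `q`: the comparison
  -- maps are `s` one way, `1 ↦ e` and `1 ↦ x` the other way, and `h` is a homotopy from the round
  -- trip to the identity.
  obtain ⟨s, hs⟩ := Module.projective_lifting_property q π hq
  replace hs (y : P₀) : q (s y) = π y := LinearMap.congr_fun hs y
  obtain ⟨e, he⟩ := hπ (q 1)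
  have hπe (a : R) : π (a • e) = q a := by rw [map_smul, he, ← map_smul, smul_eq_mul, mul_one]
  obtain ⟨x, hx⟩ : ∃ x, d x = r • e := (hdπ _).1 (by rw [hπe, hq_iff])
  obtain ⟨z, hz⟩ := hgr x
  obtain ⟨h, hh⟩ : ∃ h : P₀ →ₗ[R] P₁, d ∘ₗ h = LinearMap.id - s.smulRight e :=
    exists_comp_eq_of_exact hdπ (LinearMap.ext fun y ↦ by simp [-map_smul, hπe, hs])
  replace hh (y : P₀) : d (h y) = y - s y • e := LinearMap.congr_fun hh y
  refine ⟨g ∘ₗ h + s.smulRight z, LinearMap.ext fun w ↦ ?_⟩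
  obtain ⟨t, ht⟩ : r ∣ s (d w) := by rw [← hq_iff, hs, hdπ.apply_apply_eq_zero]
  have hgh : g (h (d w)) = g (w - t • x) := by
    refine LinearMap.sub_mem_ker_iff.1 (hg (LinearMap.sub_mem_ker_iff.2 ?_))
    rw [hh, map_sub, map_smul, hx, ht, mul_comm, mul_smul]
  calc g (h (d w)) + s (d w) • z = g w - t • r • z + (r * t) • z := by
        rw [hgh, map_sub, map_smul, hz, ht]
    _ = g w := by rw [mul_comm, mul_smul, sub_add_cancel]

universe v

theorem ext_one_map_eq_zero_of_forall_eq_smul [Small.{v} R] {M N N' : Type v}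
    [AddCommGroup M] [Module R M] [AddCommGroup N] [Module R N] [AddCommGroup N'] [Module R N']
    {q : R →ₗ[R] M} (hq : Function.Surjective q) (hqr : LinearMap.ker q = Ideal.span {r})
    (f : N →ₗ[R] N') (hf : ∀ y, ∃ z, f y = r • z) :
    ((Ext R (ModuleCat.{v} R) 1).obj (Opposite.op (ModuleCat.of R M))).map
      (ModuleCat.ofHom f) = 0 := by
  let P := projectiveResolution (ModuleCat.of R M)
  have exact₁ : Function.Exact (P.complex.d 2 1) (P.complex.d 1 0) :=
    (ShortComplex.ShortExact.moduleCat_exact_iff_function_exact _).1 (P.exact_succ 0)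
  have exact₀ : Function.Exact (P.complex.d 1 0) (P.π.f 0) :=
    (ShortComplex.ShortExact.moduleCat_exact_iff_function_exact _).1 P.exact₀
  have surjective_π : Function.Surjective (P.π.f 0) :=
    (ModuleCat.epi_iff_surjective _).1 inferInstance
  refine ext_succ_map_eq_zero_of_forall_exists_d_comp_eq P _ 0 fun φ hφ ↦ ?_
  have hker : LinearMap.ker (P.complex.d 1 0).hom ≤ LinearMap.ker (f ∘ₗ φ.hom) := by
    intro x hx
    obtain ⟨y, rfl⟩ := (exact₁ x).1 hx
    have hφy : φ (P.complex.d 2 1 y) = 0 := congrArg (fun g ↦ g.hom y) hφ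
    exact (congrArg f hφy).trans (map_zero f)
  obtain ⟨ψ, hψ⟩ := exists_comp_eq_of_forall_eq_smul exact₀ surjective_π hq hqr hker
    fun x ↦ hf (φ x)
  exact ⟨ModuleCat.ofHom ψ, ModuleCat.hom_ext hψ⟩

end CyclicModule

theorem zmod_exists_eq_nsmul_of_nsmul_eq_zero {a b m : ℕ} (ha : a ≠ 0) (hab : a * m ∣ b)
    {x : ZMod b} (hx : a • x = 0) : ∃ z, x = m • z := by
  obtain ⟨k, rfl⟩ := ZMod.intCast_surjective x
  have hb : (b : ℤ) ∣ a * k := by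
    rw [← ZMod.intCast_zmod_eq_zero_iff_dvd]
    simpa using hx
  have hm : (a * m : ℤ) ∣ a * k := dvd_trans (mod_cast hab) hb
  obtain ⟨c, rfl⟩ := (mul_dvd_mul_iff_left (Nat.cast_ne_zero.2 ha)).1 hm
  exact ⟨c, by simp⟩

theorem ext_pushforward_zero_general {a b m : ℕ} (ha : a ≠ 0) (hab : a * m ∣ b)
    {A : Type} [AddCommGroup A] (f : A →+ ZMod b) (hf : ∀ x, a • f x = 0) :
    ((Ext ℤ (ModuleCat ℤ) 1).obj (Opposite.op (ModuleCat.of ℤ (ZMod m)))).map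
      (ModuleCat.ofHom f.toIntLinearMap) = 0 := by
  let q : ℤ →ₗ[ℤ] ZMod m := Algebra.linearMap ℤ (ZMod m)
  have hq : LinearMap.ker q = Ideal.span {(m : ℤ)} := ZMod.ker_intCastRingHom m
  refine ext_one_map_eq_zero_of_forall_eq_smul (q := q) ZMod.intCast_surjective hq _ fun y ↦ ?_
  obtain ⟨z, hz⟩ := zmod_exists_eq_nsmul_of_nsmul_eq_zero ha hab (hf y)
  exact ⟨z, hz.trans (natCast_zsmul z m).symm⟩

/-- For any injective additive map `f : ℤ/p^n → ℤ/p^(n+1)`, the induced map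
`f_* : Ext¹_ℤ(ℤ/p, ℤ/p^n) → Ext¹_ℤ(ℤ/p, ℤ/p^(n+1))` is zero. -/
theorem ext_pushforward_zero
    (p : ℕ) (hp : p.Prime) (n : ℕ) (hn : 1 ≤ n)
    (f : ZMod (p ^ n) →+ ZMod (p ^ (n + 1))) (hf : Function.Injective f) :
    ((Ext ℤ (ModuleCat ℤ) 1).obj (Opposite.op (ModuleCat.of ℤ (ZMod p)))).map
      (ModuleCat.ofHom f.toIntLinearMap) = 0 := by
  exact ext_pushforward_zero_general (pow_ne_zero n hp.ne_zero) (pow_succ p n).symm.dvd f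
    fun x ↦ by rw [← map_nsmul, ZModModule.char_nsmul_eq_zero, map_zero]
end

section
/- Let p be a prime, n ≥ 1, and H a finite group of cardinality p^n with a cyclic subgroup Z of order p contained in the center of H. Let k be a field of characteristic 0 containing a primitive p^{n+1}-th root of unity. Then there exist a natural number d which is a power of p and an injective group homomorphism ρ : H → SL_d(k) such that ρ(z) lies in the center of SL_d(k) (i.e. is a scalar matrix) for every z ∈ Z. (The representation can be taken to be the one induced from a faithful 1-dimensional representation of Z, of dimension d = [H : Z], suitably twisted to have determinant 1.) -/
/-!
Let `χ` be a faithful character of `Z`. The representation of `H` induced from `χ` is faithful, and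
a central element `z` of `Z` acts through it as the scalar `χ z`. A direct sum of `N` copies of it
keeps both properties, while its determinant is the `N`-th power of the original determinant, hence
`1` as soon as `h ^ N = 1` for all `h ∈ H`. Summing copies replaces twisting by a character of `H`,
which cannot always make the determinant trivial: `(ℤ/2)²` does not embed into `SL_2` of a field of
characteristic `0`.
-/

theorem exists_injective_monoidHom_of_isPrimitiveRoot {C M : Type*} [Group C] [Finite C]
    [IsCyclic C] [CommMonoid M] {ζ : M} (hζ : IsPrimitiveRoot ζ (Nat.card C)) :
    ∃ χ : C →* M, Function.Injective χ := by
  obtain ⟨u, rfl⟩ := hζ.isUnit Nat.card_pos.ne'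
  have hu : IsPrimitiveRoot u (Nat.card C) := IsPrimitiveRoot.coe_units_iff.1 hζ
  have hcard : Nat.card C = Nat.card (Subgroup.zpowers u) := by
    rw [Nat.card_zpowers, ← hu.eq_orderOf]
  let e : C ≃* Subgroup.zpowers u := mulEquivOfCyclicCardEq hcard
  exact ⟨(Units.coeHom M).comp ((Subgroup.zpowers u).subtype.comp e.toMonoidHom),
    Units.val_injective.comp (Subtype.val_injective.comp e.injective)⟩

section InducedMatrix

variable {G R : Type*} [Group G] [Semiring R] {Z : Subgroup G}

/-- The extension by zero to `G` of a character `χ` of the subgroup `Z`; the entries of the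
matrices of the representation induced from `χ` are values of this function. -/
noncomputable def zeroExtension (χ : Z →* R) : G → R :=
  Function.extend Subtype.val χ 0

theorem zeroExtension_coe (χ : Z →* R) (z : Z) : zeroExtension χ z = χ z :=
  Subtype.val_injective.extend_apply χ 0 z

theorem zeroExtension_of_notMem (χ : Z →* R) {g : G} (hg : g ∉ Z) : zeroExtension χ g = 0 :=
  Function.extend_apply' _ _ _ fun ⟨z, hz⟩ => hg (hz ▸ z.2)

theorem zeroExtension_mul_coe (χ : Z →* R) (g : G) (z : Z) :
    zeroExtension χ (g * z) = zeroExtension χ g * χ z := by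
  by_cases hg : g ∈ Z
  · lift g to Z using hg
    rw [← Subgroup.coe_mul, zeroExtension_coe, zeroExtension_coe, map_mul]
  · have hgz : g * z ∉ Z := fun h => hg ((Z.mul_mem_cancel_right z.2).1 h)
    rw [zeroExtension_of_notMem χ hg, zeroExtension_of_notMem χ hgz, zero_mul]

theorem eq_one_of_zeroExtension_eq_one [Nontrivial R] {χ : Z →* R} (hχ : Function.Injective χ)
    {g : G} (hg : zeroExtension χ g = 1) : g = 1 := by
  by_cases hgZ : g ∈ Z
  · lift g to Z using hgZ
    rw [zeroExtension_coe] at hg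
    rw [(map_eq_one_iff χ hχ).1 hg, Subgroup.coe_one]
  · exact absurd ((zeroExtension_of_notMem χ hgZ).symm.trans hg) zero_ne_one

theorem out_inv_mul_mul_out_mem_iff {g : G} {q q' : G ⧸ Z} :
    q.out⁻¹ * g * q'.out ∈ Z ↔ q = g • q' := by
  rw [mul_assoc, ← QuotientGroup.eq, QuotientGroup.out_eq', ← smul_eq_mul,
    MulAction.Quotient.coe_smul_out]

variable [Fintype (G ⧸ Z)] [DecidableEq (G ⧸ Z)]

/-- The representation of `G` induced from the character `χ` of `Z`, as monomial matrices with
respect to the coset representatives `Quotient.out`. -/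
noncomputable def inducedMatrix (χ : Z →* R) : G →* Matrix (G ⧸ Z) (G ⧸ Z) R where
  toFun g := Matrix.of fun q q' => zeroExtension χ (q.out⁻¹ * g * q'.out)
  map_one' := by
    ext q q'
    rw [Matrix.of_apply, Matrix.one_apply]
    split_ifs with hq
    · rw [hq, mul_one, inv_mul_cancel, ← Subgroup.coe_one, zeroExtension_coe, map_one]
    · exact zeroExtension_of_notMem χ fun h =>
        hq ((out_inv_mul_mul_out_mem_iff.1 h).trans (one_smul G q'))
  map_mul' g h := by
    ext q q'
    simp only [Matrix.mul_apply, Matrix.of_apply]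
    rw [Finset.sum_eq_single (h • q')]
    · let z : Z := ⟨(h • q').out⁻¹ * h * q'.out, out_inv_mul_mul_out_mem_iff.2 rfl⟩
      have hfactor : q.out⁻¹ * (g * h) * q'.out = q.out⁻¹ * g * (h • q').out * z := by
        simp only [z]
        group
      rw [hfactor, zeroExtension_mul_coe, ← zeroExtension_coe χ z]
    · intro r _ hr
      rw [zeroExtension_of_notMem χ (mt out_inv_mul_mul_out_mem_iff.1 hr), mul_zero]
    · exact fun hmem => absurd (Finset.mem_univ _) hmem

theorem inducedMatrix_apply (χ : Z →* R) (g : G) (q q' : G ⧸ Z) :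
    inducedMatrix χ g q q' = zeroExtension χ (q.out⁻¹ * g * q'.out) :=
  rfl

theorem inducedMatrix_injective [Nontrivial R] {χ : Z →* R} (hχ : Function.Injective χ) :
    Function.Injective (inducedMatrix χ) := by
  refine (injective_iff_map_eq_one _).2 fun g hg => ?_
  let s : G := ((1 : G) : G ⧸ Z).out
  have hentry : zeroExtension χ (s⁻¹ * g * s) = 1 := by
    rw [← inducedMatrix_apply, hg, Matrix.one_apply_eq]
  have hconj : s⁻¹ * g * s⁻¹⁻¹ = 1 := by
    rw [inv_inv]
    exact eq_one_of_zeroExtension_eq_one hχ hentry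
  exact conj_eq_one_iff.1 hconj

theorem inducedMatrix_coe_of_mem_center (χ : Z →* R) {z : Z}
    (hz : (z : G) ∈ Subgroup.center G) :
    inducedMatrix χ (z : G) = Matrix.scalar (G ⧸ Z) (χ z) := by
  ext q q'
  have hcomm : q.out⁻¹ * z * q'.out = q.out⁻¹ * 1 * q'.out * z := by
    rw [mul_assoc, ← Subgroup.mem_center_iff.1 hz, mul_one, mul_assoc]
  rw [inducedMatrix_apply, hcomm, zeroExtension_mul_coe, ← inducedMatrix_apply, map_one,
    Matrix.scalar_apply, Matrix.one_apply, Matrix.diagonal_apply, ite_mul, one_mul, zero_mul]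

end InducedMatrix

section DiagonalCopies

variable {ι : Type*} (κ : Type*) [Fintype ι] [DecidableEq ι] [Fintype κ] [DecidableEq κ]

/-- The block diagonal matrix with all diagonal blocks, indexed by `κ`, equal to a given matrix;
on representations this is the direct sum of `κ` copies. -/
def diagonalCopies {R : Type*} [Semiring R] : Matrix ι ι R →+* Matrix (ι × κ) (ι × κ) R :=
  (Matrix.blockDiagonalRingHom ι κ R).comp (Pi.constRingHom κ (Matrix ι ι R))

theorem diagonalCopies_apply {R : Type*} [Semiring R] (A : Matrix ι ι R) :
    diagonalCopies κ A = Matrix.blockDiagonal fun _ : κ => A :=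
  rfl

theorem diagonalCopies_injective {R : Type*} [Semiring R] [Nonempty κ] :
    Function.Injective (diagonalCopies κ : Matrix ι ι R → Matrix (ι × κ) (ι × κ) R) :=
  Matrix.blockDiagonal_injective.comp Function.const_injective

theorem diagonalCopies_scalar {R : Type*} [Semiring R] (c : R) :
    diagonalCopies κ (Matrix.scalar ι c) = Matrix.scalar (ι × κ) c :=
  Matrix.blockDiagonal_diagonal fun _ _ => c

theorem det_diagonalCopies {R : Type*} [CommRing R] (A : Matrix ι ι R) :
    (diagonalCopies κ A).det = A.det ^ Fintype.card κ := by
  rw [diagonalCopies_apply, Matrix.det_blockDiagonal, Finset.prod_const, Finset.card_univ]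

end DiagonalCopies

section SpecialLinearCopies

variable {G R ι κ n : Type*} [Monoid G] [CommRing R] [Fintype ι] [DecidableEq ι]
  [Fintype κ] [DecidableEq κ] [Fintype n] [DecidableEq n]

theorem det_diagonalCopies_eq_one (ρ : G →* Matrix ι ι R) {g : G}
    (hg : g ^ Fintype.card κ = 1) : (diagonalCopies κ (ρ g)).det = 1 := by
  rw [det_diagonalCopies, ← Matrix.det_pow, ← map_pow, hg, map_one, Matrix.det_one]

/-- The direct sum of `κ` copies of a matrix representation `ρ`, as a homomorphism to the special
linear group. The bijection `e` renames the basis, so that the target can be some `SL_d`. -/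
def specialLinearCopies (e : ι × κ ≃ n) (ρ : G →* Matrix ι ι R)
    (hG : ∀ g : G, g ^ Fintype.card κ = 1) : G →* Matrix.SpecialLinearGroup n R where
  toFun g := ⟨Matrix.reindexAlgEquiv R R e (diagonalCopies κ (ρ g)), by
    rw [Matrix.det_reindexAlgEquiv, det_diagonalCopies_eq_one ρ (hG g)]⟩
  map_one' := Subtype.ext (by simp only [map_one, Matrix.SpecialLinearGroup.coe_one])
  map_mul' g h := Subtype.ext (by simp only [map_mul]; rfl)

theorem coe_specialLinearCopies (e : ι × κ ≃ n) (ρ : G →* Matrix ι ι R)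
    (hG : ∀ g : G, g ^ Fintype.card κ = 1) (g : G) :
    (specialLinearCopies e ρ hG g : Matrix n n R) =
      Matrix.reindexAlgEquiv R R e (diagonalCopies κ (ρ g)) :=
  rfl

theorem specialLinearCopies_injective [Nonempty κ] (e : ι × κ ≃ n) {ρ : G →* Matrix ι ι R}
    (hρ : Function.Injective ρ) (hG : ∀ g : G, g ^ Fintype.card κ = 1) :
    Function.Injective (specialLinearCopies e ρ hG) := fun _ _ h =>
  hρ (diagonalCopies_injective κ ((Matrix.reindexAlgEquiv R R e).injective
    (congrArg Subtype.val h)))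

theorem specialLinearCopies_mem_center (e : ι × κ ≃ n) {ρ : G →* Matrix ι ι R}
    (hG : ∀ g : G, g ^ Fintype.card κ = 1) {g : G} {c : R} (hg : ρ g = Matrix.scalar ι c) :
    specialLinearCopies e ρ hG g ∈ Subgroup.center (Matrix.SpecialLinearGroup n R) := by
  have hscalar : (specialLinearCopies e ρ hG g : Matrix n n R) = Matrix.scalar n c := by
    rw [coe_specialLinearCopies, hg, diagonalCopies_scalar]
    exact (Matrix.reindexAlgEquiv R R e).commutes c
  refine Subgroup.mem_center_iff.2 fun A => Subtype.ext ?_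
  rw [Matrix.SpecialLinearGroup.coe_mul, Matrix.SpecialLinearGroup.coe_mul, hscalar]
  exact (Matrix.scalar_commute c (Commute.all c) (A : Matrix n n R)).symm.eq

end SpecialLinearCopies

theorem exists_faithful_sl_rep_central_on_Z_general
    (H : Type*) [Group H] [Finite H] (Z : Subgroup H) [IsCyclic Z]
    (hZcenter : Z ≤ Subgroup.center H)
    (k : Type*) [CommRing k] [Nontrivial k] (ζ : k) (hζ : IsPrimitiveRoot ζ (Nat.card Z)) :
    ∃ ρ : H →* Matrix.SpecialLinearGroup (Fin (Z.index * Monoid.exponent H)) k,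
      Function.Injective ρ ∧
      ∀ z ∈ Z, ρ z ∈ Subgroup.center
        (Matrix.SpecialLinearGroup (Fin (Z.index * Monoid.exponent H)) k) := by
  classical
  have := Fintype.ofFinite (H ⧸ Z)
  have : NeZero (Monoid.exponent H) := ⟨Monoid.exponent_ne_zero_of_finite⟩
  obtain ⟨χ, hχ⟩ := exists_injective_monoidHom_of_isPrimitiveRoot hζ
  let e : (H ⧸ Z) × Fin (Monoid.exponent H) ≃ Fin (Z.index * Monoid.exponent H) :=
    ((Finite.equivFin (H ⧸ Z)).prodCongr (Equiv.refl _)).trans finProdFinEquiv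
  have hpow (h : H) : h ^ Fintype.card (Fin (Monoid.exponent H)) = 1 := by
    rw [Fintype.card_fin, Monoid.pow_exponent_eq_one]
  exact ⟨specialLinearCopies e (inducedMatrix χ) hpow,
    specialLinearCopies_injective e (inducedMatrix_injective hχ) hpow,
    fun z hz => specialLinearCopies_mem_center e hpow
      (inducedMatrix_coe_of_mem_center χ (z := ⟨z, hz⟩) (hZcenter hz))⟩

/-- Let `H` be a group of order `p^n` with a central cyclic subgroup `Z` of order `p`,
and `k` a field of characteristic `0` containing a primitive `p^(n+1)`-th root of unity.
Then `H` has a faithful representation `ρ : H → SL_d(k)` with `d` a power of `p`, whose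
restriction to `Z` takes values in the center of `SL_d(k)`. -/
theorem exists_faithful_sl_rep_central_on_Z
    (p n : ℕ) (hp : p.Prime) (hn : 1 ≤ n)
    (H : Type*) [Group H] (hH : Nat.card H = p ^ n)
    (Z : Subgroup H) (hZcyc : IsCyclic Z) (hZcard : Nat.card Z = p)
    (hZcenter : Z ≤ Subgroup.center H)
    (k : Type*) [Field k] [CharZero k]
    (ζ : k) (hζ : IsPrimitiveRoot ζ (p ^ (n + 1))) :
    ∃ (d m : ℕ) (ρ : H →* Matrix.SpecialLinearGroup (Fin d) k),
      d = p ^ m ∧ Function.Injective ρ ∧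
      ∀ z ∈ Z, ρ z ∈ Subgroup.center (Matrix.SpecialLinearGroup (Fin d) k) := by
  have : Finite H := Nat.finite_of_card_ne_zero (hH ▸ pow_ne_zero n hp.ne_zero)
  have hζp : IsPrimitiveRoot (ζ ^ p ^ n) (Nat.card Z) :=
    hζ.pow (pow_pos hp.pos _) (by rw [hZcard, pow_succ])
  obtain ⟨ρ, hinj, hcenter⟩ :=
    exists_faithful_sl_rep_central_on_Z_general H Z hZcenter k (ζ ^ p ^ n) hζp
  have hdvd : Z.index * Monoid.exponent H ∣ p ^ (n + n) := by
    rw [pow_add, ← hH]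
    exact mul_dvd_mul Z.index_dvd_card Group.exponent_dvd_nat_card
  obtain ⟨m, -, hm⟩ := (Nat.dvd_prime_pow hp).1 hdvd
  exact ⟨_, m, ρ, hm, hinj, hcenter⟩
end

section
/- Let E be a group of cardinality 64 containing a subgroup C which is cyclic of cardinality 8, is contained in the center of E, and such that the quotient group E/C is isomorphic to the quaternion group Q₈ of order 8. Then E is isomorphic either to the direct product (ℤ/8ℤ) × Q₈, or to the group presented by generators a, b with relations a¹⁶ = 1, b⁴ = 1, a⁻¹b⁻¹ab = b² (the group numbered 44 among groups of order 64 in the GAP classification). -/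
/-- The relators `a¹⁶`, `b⁴`, `⁅a,b⁆·b⁻²` of the group numbered 44 in the GAP
classification of groups of order 64, inside the free group on two generators
(`a = FreeGroup.of 0`, `b = FreeGroup.of 1`). -/
def g44Rels : Set (FreeGroup (Fin 2)) :=
  {FreeGroup.of 0 ^ 16, FreeGroup.of 1 ^ 4,
    (FreeGroup.of 0)⁻¹ * (FreeGroup.of 1)⁻¹ * FreeGroup.of 0 * FreeGroup.of 1 *
      (FreeGroup.of 1 ^ 2)⁻¹}

/-!
Let `π : E → Q₈` be the projection, with central cyclic kernel `C`. Lifts `g`, `h` of two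
non-commuting elements of `Q₈` and their product `g * h` have squares in a single coset of `C`,
because all elements of order 4 in `Q₈` have the same square. As `C` modulo its squares has at most
two elements, two of these three squares agree up to the square of an element of `C`; absorbing
that element into one of the two lifts gives `u`, `v` with `u² = v²`. Then `y = v` inverts
`x = u * v⁻¹`. After rescaling `y` by an element of `C`, either `x² = y²`, so that `x` and `y`
generate a copy of `Q₈` that splits `π`, or `x² = y² * z` with `z` a generator of `C`, so that `y`
and `x` satisfy the relations of the presented group.
-/

section Group

variable {G : Type*} [Group G] {x y : G}

theorem pow_two_mul_eq_one_of_semiconjBy_inv {n : ℕ} (hinv : SemiconjBy y x x⁻¹)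
    (hcomm : Commute y (x ^ n)) : x ^ (2 * n) = 1 := by
  have h : x ^ n * y = (x ^ n)⁻¹ * y := by
    rw [← hcomm.eq, (hinv.pow_right n).eq, inv_pow]
  rw [two_mul, pow_add, ← eq_inv_iff_mul_eq_one]
  exact mul_right_cancel h

theorem even_of_commute_zpow {i : ℤ} (hxy : ¬Commute x y) (hsq : Commute x (y ^ 2))
    (hi : Commute x (y ^ i)) : Even i := by
  by_contra hodd
  obtain ⟨k, rfl⟩ := Int.not_even_iff_odd.mp hodd
  have hy : y = (y ^ 2) ^ (-k) * y ^ (2 * k + 1) := by group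
  exact hxy (hy ▸ (hsq.zpow_right (-k)).mul_right hi)

theorem pow_four_eq_one_of_sq_eq_sq_mul {z : G} (hz : Commute y z) (hinv : SemiconjBy y x x⁻¹)
    (hsq : x ^ 2 = y ^ 2 * z) : x ^ 4 = 1 := by
  refine pow_two_mul_eq_one_of_semiconjBy_inv (n := 2) hinv ?_
  rw [hsq]
  exact ((Commute.refl y).pow_right 2).mul_right hz

theorem pow_two_mul_eq_one_of_sq_eq_sq_mul {z : G} (hz : Commute y z) (hinv : SemiconjBy y x x⁻¹)
    (hsq : x ^ 2 = y ^ 2 * z) {n : ℕ} (hn : Even n) (hzn : z ^ n = 1) : y ^ (2 * n) = 1 := by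
  have hx : x ^ (2 * n) = 1 := by
    obtain ⟨k, rfl⟩ := hn
    rw [show 2 * (k + k) = 4 * k by ring, pow_mul, pow_four_eq_one_of_sq_eq_sq_mul hz hinv hsq,
      one_pow]
  rwa [pow_mul, hsq, (hz.pow_left 2).mul_pow, hzn, mul_one, ← pow_mul] at hx

theorem semiconjBy_mul_inv_of_sq_eq_sq (hsq : x ^ 2 = y ^ 2) :
    SemiconjBy y (x * y⁻¹) (x * y⁻¹)⁻¹ := by
  have h : x * y⁻¹ = x⁻¹ * y := by
    rw [mul_inv_eq_iff_eq_mul, mul_assoc, eq_inv_mul_iff_mul_eq, ← sq, ← sq, hsq]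
  rw [SemiconjBy, mul_inv_rev, inv_inv, mul_assoc, ← h]

theorem exists_eq_zpow_mul_zpow_of_semiconjBy_inv (hinv : SemiconjBy y x x⁻¹) {g : G}
    (hg : g ∈ Subgroup.zpowers y ⊔ Subgroup.zpowers x) : ∃ i j : ℤ, g = y ^ i * x ^ j := by
  have hnormalizes : Subgroup.zpowers y ≤
      Subgroup.normalizer (Subgroup.zpowers x : Set G) := by
    rw [Subgroup.zpowers_le, Subgroup.mem_normalizer_iff_map_conj_eq, MonoidHom.map_zpowers]
    simp [MulAut.conj_apply, hinv.eq]
  rw [← SetLike.mem_coe, Subgroup.coe_mul_of_left_le_normalizer_right _ _ hnormalizes] at hg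
  obtain ⟨_, ⟨i, rfl⟩, _, ⟨j, rfl⟩, rfl⟩ := hg
  exact ⟨i, j, rfl⟩

theorem commutator_eq_sq_iff_semiconjBy_inv :
    y⁻¹ * x⁻¹ * y * x * (x ^ 2)⁻¹ = 1 ↔ SemiconjBy y x x⁻¹ := by
  rw [mul_inv_eq_one, sq, mul_left_inj, mul_assoc, inv_mul_eq_iff_eq_mul, eq_comm]
  rfl

theorem isSquare_of_odd_card (hodd : Odd (Nat.card G)) (g : G) : IsSquare g := by
  obtain ⟨k, hk⟩ := hodd
  refine ⟨g ^ (k + 1), ?_⟩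
  rw [← pow_add, show k + 1 + (k + 1) = Nat.card G + 1 by lia, pow_succ, pow_card_eq_one', one_mul]

theorem isSquare_or_eq_sq_mul_generator {z : G} (hz : ∀ g, g ∈ Subgroup.zpowers z) (g : G) :
    IsSquare g ∨ ∃ r, g = r ^ 2 * z := by
  obtain ⟨k, rfl⟩ := Subgroup.mem_zpowers_iff.mp (hz g)
  rcases Int.even_or_odd' k with ⟨l, rfl | rfl⟩
  · exact .inl ((even_two_mul l).isSquare_zpow z)
  · exact .inr ⟨z ^ l, by group⟩

theorem isSquare_inv_mul_of_not_isSquare [IsCyclic G] {g h : G} (hg : ¬IsSquare g)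
    (hh : ¬IsSquare h) : IsSquare (g⁻¹ * h) := by
  obtain ⟨z, hz⟩ := IsCyclic.exists_generator (α := G)
  obtain ⟨k, rfl⟩ := Subgroup.mem_zpowers_iff.mp (hz g)
  obtain ⟨l, rfl⟩ := Subgroup.mem_zpowers_iff.mp (hz h)
  have hk : Odd k := Int.not_even_iff_odd.mp fun hk => hg (hk.isSquare_zpow z)
  have hl : Odd l := Int.not_even_iff_odd.mp fun hl => hh (hl.isSquare_zpow z)
  rw [← zpow_neg, ← zpow_add]
  exact (hk.neg.add_odd hl).isSquare_zpow z

end Group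

section CentralKernel

variable {E Q : Type*} [Group E] [Group Q] {π : E →* Q}

theorem map_mul_coe_ker (g : E) (c : π.ker) : π (g * c) = π g := by
  rw [map_mul, MonoidHom.mem_ker.mp c.2, mul_one]

theorem commute_coe_ker (hcenter : π.ker ≤ Subgroup.center E) (g : E) (c : π.ker) :
    Commute g c :=
  Subgroup.mem_center_iff.mp (hcenter c.2) g

theorem exists_not_commute_sq_eq_sq_of_isSquare (hcenter : π.ker ≤ Subgroup.center E) {g h : E}
    (hgh : ¬Commute (π g) (π h)) {c : π.ker} (hc : IsSquare c) (hsq : g ^ 2 = h ^ 2 * c) :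
    ∃ u v : E, ¬Commute (π u) (π v) ∧ u ^ 2 = v ^ 2 := by
  obtain ⟨r, rfl⟩ := hc
  refine ⟨g, h * r, by rwa [map_mul_coe_ker], ?_⟩
  rw [(commute_coe_ker hcenter h r).mul_pow, hsq, Subgroup.coe_mul, sq (r : E)]

theorem nonempty_mulEquiv_ker_prod (hcenter : π.ker ≤ Subgroup.center E) {s : Q →* E}
    (hs : Function.Bijective (π.comp s)) : Nonempty (E ≃* π.ker × Q) := by
  have hcomm (c : π.ker) (q : Q) : Commute (π.ker.subtype c) (s q) :=
    (commute_coe_ker hcenter (s q) c).symm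
  refine ⟨(MulEquiv.ofBijective (π.ker.subtype.noncommCoprod s hcomm) ⟨?_, fun g => ?_⟩).symm⟩
  · rw [injective_iff_map_eq_one]
    rintro ⟨c, q⟩ hcq
    replace hcq : (c : E) * s q = 1 := hcq
    have hq : q = 1 := by
      refine hs.injective ?_
      simpa [MonoidHom.mem_ker.mp c.2] using congrArg π hcq
    subst hq
    simpa using hcq
  · obtain ⟨q, hq⟩ := hs.surjective (π g)
    refine ⟨(⟨g * (s q)⁻¹, ?_⟩, q), by simp⟩
    rw [MonoidHom.mem_ker, map_mul, map_inv, ← hq, MonoidHom.comp_apply, mul_inv_cancel]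

end CentralKernel

section QuaternionGroup

open QuaternionGroup

theorem exists_quaternionGroup_monoidHom {G : Type*} [Group G] {n : ℕ} {x y : G}
    (hsq : y ^ 2 = x ^ n) (hinv : SemiconjBy y x x⁻¹) :
    ∃ s : QuaternionGroup n →* G, s (a 1) = x ∧ s (xa 0) = y := by
  have hx : x ^ (2 * n) = 1 :=
    pow_two_mul_eq_one_of_semiconjBy_inv hinv (hsq ▸ (Commute.refl y).pow_right 2)
  let power : ZMod (2 * n) →+ Additive G :=
    ZMod.lift (2 * n) ⟨zmultiplesHom (Additive G) (.ofMul x), by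
      rw [zmultiplesHom_apply, natCast_zsmul, ← ofMul_pow, hx, ofMul_one]⟩
  have power_intCast (k : ℤ) : (power k).toMul = x ^ k := by
    simp [power]
  have hmove (k : ℤ) : x ^ k * y = y * x ^ (-k) := by
    rw [(hinv.zpow_right (-k)).eq, inv_zpow', neg_neg]
  let toFun : QuaternionGroup n → G
    | a i => (power i).toMul
    | xa i => y * (power i).toMul
  refine ⟨MonoidHom.mk' toFun ?_, ?_, ?_⟩
  · rintro (i | i) (j | j) <;> obtain ⟨k, rfl⟩ := ZMod.intCast_surjective i <;>
      obtain ⟨l, rfl⟩ := ZMod.intCast_surjective j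
    · simp [toFun]
    · simp only [a_mul_xa, toFun, ← Int.cast_sub, power_intCast]
      rw [← mul_assoc, hmove, mul_assoc, ← zpow_add, neg_add_eq_sub]
    · simp [toFun, mul_assoc]
    · simp only [xa_mul_xa, toFun, ← Int.cast_natCast (R := ZMod (2 * n)) n, ← Int.cast_sub,
        ← Int.cast_add, power_intCast]
      rw [mul_assoc, ← mul_assoc (x ^ k), hmove, mul_assoc, ← mul_assoc y y, ← sq, hsq,
        ← zpow_natCast, ← zpow_add, ← zpow_add]
      congr 1
      ring
  · simpa [toFun] using power_intCast 1
  · simp [toFun]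

theorem sq_eq_a_two_of_not_commute {p q : QuaternionGroup 2} (hpq : ¬Commute p q) :
    p ^ 2 = a 2 := by
  have h : ∀ p q : QuaternionGroup 2, p * q ≠ q * p → p ^ 2 = a 2 := by decide
  exact h p q hpq

theorem orderOf_eq_four_of_not_commute {p q : QuaternionGroup 2} (hpq : ¬Commute p q) :
    orderOf p = 4 := by
  refine orderOf_eq_prime_pow (p := 2) (n := 1) ?_ ?_
  · rw [pow_one, sq_eq_a_two_of_not_commute hpq]
    decide
  · rw [pow_succ, pow_one, pow_mul, sq_eq_a_two_of_not_commute hpq]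
    decide

theorem even_and_even_of_zpow_mul_zpow_eq_one {p q : QuaternionGroup 2} (hpq : ¬Commute p q)
    {i j : ℤ} (h : q ^ i * p ^ j = 1) : Even i ∧ Even j := by
  have hsq : p ^ 2 = q ^ 2 := by
    rw [sq_eq_a_two_of_not_commute hpq, sq_eq_a_two_of_not_commute (mt Commute.symm hpq)]
  constructor
  · refine even_of_commute_zpow hpq (hsq ▸ (Commute.refl p).pow_right 2) ?_
    rw [eq_inv_of_mul_eq_one_left h]
    exact ((Commute.refl p).zpow_right j).inv_right
  · refine even_of_commute_zpow (mt Commute.symm hpq) (hsq ▸ (Commute.refl q).pow_right 2) ?_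
    rw [eq_inv_of_mul_eq_one_right h]
    exact ((Commute.refl q).zpow_right i).inv_right

theorem eq_top_of_not_commute_mem {H : Subgroup (QuaternionGroup 2)} {p q : QuaternionGroup 2}
    (hpq : ¬Commute p q) (hp : p ∈ H) (hq : q ∈ H) : H = ⊤ := by
  have h : ∀ p q : QuaternionGroup 2, p * q ≠ q * p →
      ∀ g, ∃ i : Fin 4, ∃ j : Fin 2, g = p ^ (i : ℕ) * q ^ (j : ℕ) := by decide
  refine (Subgroup.eq_top_iff' H).mpr fun g => ?_
  obtain ⟨i, j, rfl⟩ := h p q hpq g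
  exact mul_mem (pow_mem hp i) (pow_mem hq j)

theorem bijective_of_not_commute_map {φ : QuaternionGroup 2 →* QuaternionGroup 2}
    {p q : QuaternionGroup 2} (hpq : ¬Commute (φ p) (φ q)) : Function.Bijective φ := by
  refine Function.Surjective.bijective_of_finite (MonoidHom.range_eq_top.mp ?_)
  exact eq_top_of_not_commute_mem hpq ⟨p, rfl⟩ ⟨q, rfl⟩

end QuaternionGroup

/-- The relators `a²ⁿ`, `b⁴`, `⁅a,b⁆·b⁻²` (with `a = FreeGroup.of 0` and `b = FreeGroup.of 1`) of
the semidirect product of a cyclic group of order 4 by a cyclic group of order `2n` whose generator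
`a` acts by inversion; this is the non-split central extension of `Q₈` by a cyclic group of even
order `n`. For `n = 0` the first relator is trivial and `a` has infinite order. -/
def inversionRels (n : ℕ) : Set (FreeGroup (Fin 2)) :=
  {FreeGroup.of 0 ^ (2 * n), FreeGroup.of 1 ^ 4,
    (FreeGroup.of 0)⁻¹ * (FreeGroup.of 1)⁻¹ * FreeGroup.of 0 * FreeGroup.of 1 *
      (FreeGroup.of 1 ^ 2)⁻¹}

section Presentation

variable {n : ℕ}

theorem inversionRels_of_zero_pow :
    (PresentedGroup.of 0 : PresentedGroup (inversionRels n)) ^ (2 * n) = 1 :=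
  PresentedGroup.one_of_mem (x := FreeGroup.of 0 ^ (2 * n)) (by simp [inversionRels])

theorem inversionRels_of_one_pow :
    (PresentedGroup.of 1 : PresentedGroup (inversionRels n)) ^ 4 = 1 :=
  PresentedGroup.one_of_mem (x := FreeGroup.of 1 ^ 4) (by simp [inversionRels])

theorem inversionRels_semiconjBy_inv :
    SemiconjBy (PresentedGroup.of 0 : PresentedGroup (inversionRels n)) (PresentedGroup.of 1)
      (PresentedGroup.of 1)⁻¹ :=
  commutator_eq_sq_iff_semiconjBy_inv.mp <|
    PresentedGroup.one_of_mem (x := (FreeGroup.of 0)⁻¹ * (FreeGroup.of 1)⁻¹ * FreeGroup.of 0 *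
      FreeGroup.of 1 * (FreeGroup.of 1 ^ 2)⁻¹) (by simp [inversionRels])

theorem inversionRels_exists_eq_zpow_mul_zpow (g : PresentedGroup (inversionRels n)) :
    ∃ i j : ℤ, g = PresentedGroup.of 0 ^ i * PresentedGroup.of 1 ^ j := by
  refine exists_eq_zpow_mul_zpow_of_semiconjBy_inv inversionRels_semiconjBy_inv ?_
  refine PresentedGroup.generated_by _ _ (Fin.forall_fin_two.mpr ⟨?_, ?_⟩) g
  · exact Subgroup.mem_sup_left (Subgroup.mem_zpowers _)
  · exact Subgroup.mem_sup_right (Subgroup.mem_zpowers _)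

theorem lift_inversionRels_eq_one {G : Type*} [Group G] {x y : G} (hy : y ^ (2 * n) = 1)
    (hx : x ^ 4 = 1) (hinv : SemiconjBy y x x⁻¹) :
    ∀ r ∈ inversionRels n, FreeGroup.lift ![y, x] r = 1 := by
  rintro r (rfl | rfl | rfl)
  · simpa using hy
  · simpa using hx
  · simpa using commutator_eq_sq_iff_semiconjBy_inv.mpr hinv

end Presentation

section CentralExtension

variable {E : Type*} [Group E] {π : E →* QuaternionGroup 2}

theorem exists_sq_eq_sq_mul_ker {g h : E} (hgh : ¬Commute (π g) (π h)) :
    ∃ c : π.ker, g ^ 2 = h ^ 2 * c := by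
  refine ⟨⟨(h ^ 2)⁻¹ * g ^ 2, ?_⟩, by simp⟩
  rw [MonoidHom.mem_ker, map_mul, map_inv, map_pow, map_pow, sq_eq_a_two_of_not_commute hgh,
    sq_eq_a_two_of_not_commute (mt Commute.symm hgh), inv_mul_cancel]

theorem exists_not_commute_sq_eq_sq (hcenter : π.ker ≤ Subgroup.center E) [IsCyclic π.ker]
    (hπ : Function.Surjective π) : ∃ u v : E, ¬Commute (π u) (π v) ∧ u ^ 2 = v ^ 2 := by
  obtain ⟨x, hx⟩ := hπ (QuaternionGroup.a 1)
  obtain ⟨y, hy⟩ := hπ (QuaternionGroup.xa 0)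
  have hyx : ¬Commute (π y) (π x) := by
    rw [hx, hy]
    exact (by decide : (QuaternionGroup.xa 0 : QuaternionGroup 2) * .a 1 ≠ .a 1 * .xa 0)
  have hxyx : ¬Commute (π (x * y)) (π x) := fun h =>
    hyx (by simpa using (Commute.inv_left (Commute.refl (π x))).mul_left h)
  have hxyy : ¬Commute (π (x * y)) (π y) := fun h =>
    hyx (by simpa using (h.mul_left (Commute.inv_left (Commute.refl (π y)))).symm)
  obtain ⟨c, hc⟩ := exists_sq_eq_sq_mul_ker hyx
  obtain ⟨d, hd⟩ := exists_sq_eq_sq_mul_ker hxyx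
  by_cases hcsq : IsSquare c
  · exact exists_not_commute_sq_eq_sq_of_isSquare hcenter hyx hcsq hc
  by_cases hdsq : IsSquare d
  · exact exists_not_commute_sq_eq_sq_of_isSquare hcenter hxyx hdsq hd
  refine exists_not_commute_sq_eq_sq_of_isSquare hcenter hxyy
    (isSquare_inv_mul_of_not_isSquare hcsq hdsq) ?_
  rw [hc, hd, Subgroup.coe_mul, Subgroup.coe_inv, mul_assoc, mul_inv_cancel_left]

theorem exists_not_commute_semiconjBy_inv (hcenter : π.ker ≤ Subgroup.center E) [IsCyclic π.ker]
    (hπ : Function.Surjective π) :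
    ∃ x y : E, ¬Commute (π x) (π y) ∧ SemiconjBy y x x⁻¹ := by
  obtain ⟨u, v, huv, hsq⟩ := exists_not_commute_sq_eq_sq hcenter hπ
  refine ⟨u * v⁻¹, v, fun h => huv ?_, semiconjBy_mul_inv_of_sq_eq_sq hsq⟩
  simpa using h.mul_left (Commute.refl (π v))

theorem nonempty_mulEquiv_ker_prod_of_sq_eq_sq (hcenter : π.ker ≤ Subgroup.center E) {x y : E}
    (hxy : ¬Commute (π x) (π y)) (hinv : SemiconjBy y x x⁻¹) (hsq : x ^ 2 = y ^ 2) :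
    Nonempty (E ≃* π.ker × QuaternionGroup 2) := by
  obtain ⟨s, rfl, rfl⟩ := exists_quaternionGroup_monoidHom hsq.symm hinv
  exact nonempty_mulEquiv_ker_prod hcenter (bijective_of_not_commute_map (φ := π.comp s) hxy)

section Nonsplit

variable {x y : E} {z : π.ker}

theorem eq_top_of_not_commute_map_of_mem (hz : ∀ c, c ∈ Subgroup.zpowers z)
    (hxy : ¬Commute (π x) (π y)) {H : Subgroup E} (hxH : x ∈ H) (hyH : y ∈ H)
    (hzH : (z : E) ∈ H) : H = ⊤ := by
  have hker : π.ker ≤ H := fun c hc => by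
    obtain ⟨k, hk⟩ := Subgroup.mem_zpowers_iff.mp (hz ⟨c, hc⟩)
    obtain rfl : (z : E) ^ k = c := congrArg Subtype.val hk
    exact zpow_mem hzH k
  have hmap : H.map π = ⊤ :=
    eq_top_of_not_commute_mem hxy (Subgroup.mem_map_of_mem π hxH) (Subgroup.mem_map_of_mem π hyH)
  rw [← Subgroup.comap_map_eq_self hker, hmap, Subgroup.comap_top]

theorem dvd_and_dvd_of_zpow_mul_zpow_eq_one (hcenter : π.ker ≤ Subgroup.center E)
    (hcard : Even (Nat.card π.ker)) (hz : ∀ c, c ∈ Subgroup.zpowers z)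
    (hxy : ¬Commute (π x) (π y)) (hinv : SemiconjBy y x x⁻¹) (hsq : x ^ 2 = y ^ 2 * z)
    {i j : ℤ} (h : y ^ i * x ^ j = 1) : (2 * Nat.card π.ker : ℤ) ∣ i ∧ 4 ∣ j := by
  have four_dvd {k : ℤ} (hk : π x ^ k = 1) : 4 ∣ k := by
    simpa [orderOf_eq_four_of_not_commute hxy] using orderOf_dvd_iff_zpow_eq_one.mpr hk
  obtain ⟨⟨r, rfl⟩, ⟨s, rfl⟩⟩ :=
    even_and_even_of_zpow_mul_zpow_eq_one hxy (by simpa using congrArg π h)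
  have hprod : x ^ (2 * (r + s)) = (z ^ r : π.ker) := calc
    x ^ (2 * (r + s)) = (x ^ 2) ^ r * x ^ (s + s) := by group
    _ = z ^ r * (y ^ (r + r) * x ^ (s + s)) := by
      rw [hsq, (commute_coe_ker hcenter _ z).mul_zpow,
        ((commute_coe_ker hcenter _ z).zpow_zpow r r).eq, mul_assoc]
      group
    _ = (z ^ r : π.ker) := by rw [h, mul_one, Subgroup.coe_zpow]
  have hrs : 4 ∣ 2 * (r + s) := four_dvd (by
    rw [← map_zpow, hprod]
    exact (z ^ r).2)
  have hx : x ^ (2 * (r + s)) = 1 := by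
    obtain ⟨k, hk⟩ := hrs
    have hx4 : x ^ (4 : ℤ) = 1 :=
      mod_cast pow_four_eq_one_of_sq_eq_sq_mul (commute_coe_ker hcenter y z) hinv hsq
    rw [hk, zpow_mul, hx4, one_zpow]
  have hr : (Nat.card π.ker : ℤ) ∣ r := by
    rw [← orderOf_eq_card_of_forall_mem_zpowers hz, orderOf_dvd_iff_zpow_eq_one]
    exact Subtype.ext (hprod.symm.trans hx)
  have hr_even : 2 ∣ r := (Int.natCast_dvd_natCast.mpr hcard.two_dvd).trans hr
  exact ⟨two_mul r ▸ mul_dvd_mul_left 2 hr, by lia⟩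

theorem nonempty_mulEquiv_presentedGroup (hcenter : π.ker ≤ Subgroup.center E)
    (hcard : Even (Nat.card π.ker)) (hz : ∀ c, c ∈ Subgroup.zpowers z)
    (hxy : ¬Commute (π x) (π y)) (hinv : SemiconjBy y x x⁻¹) (hsq : x ^ 2 = y ^ 2 * z) :
    Nonempty (E ≃* PresentedGroup (inversionRels (Nat.card π.ker))) := by
  have hyz : Commute y z := commute_coe_ker hcenter y z
  have hz_card : (z : E) ^ Nat.card π.ker = 1 := congrArg Subtype.val (pow_card_eq_one' (x := z))
  let f := PresentedGroup.toGroup <| lift_inversionRels_eq_one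
    (pow_two_mul_eq_one_of_sq_eq_sq_mul hyz hinv hsq hcard hz_card)
    (pow_four_eq_one_of_sq_eq_sq_mul hyz hinv hsq) hinv
  have hf0 : f (.of 0) = y := PresentedGroup.toGroup.of _
  have hf1 : f (.of 1) = x := PresentedGroup.toGroup.of _
  refine ⟨(MulEquiv.ofBijective f ⟨?_, MonoidHom.range_eq_top.mp ?_⟩).symm⟩
  · rw [injective_iff_map_eq_one]
    intro g hg
    obtain ⟨i, j, rfl⟩ := inversionRels_exists_eq_zpow_mul_zpow g
    rw [map_mul, map_zpow, map_zpow, hf0, hf1] at hg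
    obtain ⟨⟨k, rfl⟩, ⟨l, rfl⟩⟩ :=
      dvd_and_dvd_of_zpow_mul_zpow_eq_one hcenter hcard hz hxy hinv hsq hg
    have ha : (.of 0 : PresentedGroup (inversionRels (Nat.card π.ker))) ^
        (2 * Nat.card π.ker : ℤ) = 1 := mod_cast inversionRels_of_zero_pow
    have hb : (.of 1 : PresentedGroup (inversionRels (Nat.card π.ker))) ^ (4 : ℤ) = 1 :=
      mod_cast inversionRels_of_one_pow
    rw [zpow_mul _ _ k, ha, zpow_mul, hb, one_zpow, one_zpow, one_mul]
  · have hxf : x ∈ f.range := ⟨_, hf1⟩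
    have hyf : y ∈ f.range := ⟨_, hf0⟩
    refine eq_top_of_not_commute_map_of_mem hz hxy hxf hyf ?_
    rw [← inv_mul_eq_iff_eq_mul.mpr hsq]
    exact mul_mem (inv_mem (pow_mem hyf 2)) (pow_mem hxf 2)

end Nonsplit

end CentralExtension

/-- For infinite `C` one has `Nat.card C = 0`, and the two groups are `ℤ × Q₈` and
`⟨a, b ∣ b⁴, ⁅a,b⁆b⁻²⟩`. -/
theorem central_extension_of_quaternion_by_cyclic8_classification_general
    {E : Type*} [Group E] (C : Subgroup E) (hCcyc : IsCyclic C)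
    (hCcenter : C ≤ Subgroup.center E)
    (π : E →* QuaternionGroup 2) (hπ : Function.Surjective π) (hker : π.ker = C) :
    Nonempty (E ≃* (Multiplicative (ZMod (Nat.card C)) × QuaternionGroup 2)) ∨
      Nonempty (E ≃* PresentedGroup (inversionRels (Nat.card C))) := by
  subst hker
  obtain ⟨x, y, hxy, hinv⟩ := exists_not_commute_semiconjBy_inv hCcenter hπ
  obtain ⟨z, hz⟩ := hCcyc.exists_generator
  obtain ⟨c, hc⟩ := exists_sq_eq_sq_mul_ker hxy
  have hxyr (r : π.ker) : ¬Commute (π x) (π (y * r)) := by rwa [map_mul_coe_ker]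
  have hinvr (r : π.ker) : SemiconjBy (y * r) x x⁻¹ :=
    hinv.mul_left (commute_coe_ker hCcenter x r).symm
  have hsqr (r : π.ker) : (y * r) ^ 2 = y ^ 2 * (r ^ 2 : π.ker) :=
    (commute_coe_ker hCcenter y r).mul_pow 2
  by_cases hcsq : IsSquare c
  · obtain ⟨r, rfl⟩ := hcsq
    obtain ⟨e⟩ := nonempty_mulEquiv_ker_prod_of_sq_eq_sq hCcenter (hxyr r) (hinvr r)
      (by rw [hc, hsqr, sq r])
    exact .inl ⟨e.trans ((zmodCyclicMulEquiv hCcyc).symm.prodCongr (.refl _))⟩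
  · obtain ⟨r, rfl⟩ := (isSquare_or_eq_sq_mul_generator hz c).resolve_left hcsq
    have hcard : Even (Nat.card π.ker) :=
      Nat.not_odd_iff_even.mp fun hodd => hcsq (isSquare_of_odd_card hodd _)
    exact .inr (nonempty_mulEquiv_presentedGroup hCcenter hcard hz (hxyr r) (hinvr r)
      (by rw [hc, hsqr, mul_assoc, Subgroup.coe_mul]))

/-- A group of order 64 which is a central extension of `Q₈` by a cyclic group of order 8
is isomorphic either to `(ℤ/8ℤ) × Q₈` or to the presented group
`⟨a, b ∣ a¹⁶ = b⁴ = 1, a⁻¹b⁻¹ab = b²⟩` (number 44 of order 64 in GAP). -/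
theorem central_extension_of_quaternion_by_cyclic8_classification
    (E : Type*) [Group E] (hE : Nat.card E = 64)
    (C : Subgroup E) (hCcyc : IsCyclic C) (hCcard : Nat.card C = 8)
    (hCcenter : C ≤ Subgroup.center E)
    (π : E →* QuaternionGroup 2) (hπ : Function.Surjective π) (hker : π.ker = C) :
    Nonempty (E ≃* (Multiplicative (ZMod 8) × QuaternionGroup 2)) ∨
      Nonempty (E ≃* PresentedGroup g44Rels) := by
  have h :=
    central_extension_of_quaternion_by_cyclic8_classification_general C hCcyc hCcenter π hπ hker
  rwa [hCcard] at h
end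

section
/- Let E be the group presented by two generators a, b subject to the relations a¹⁶ = 1, b⁴ = 1, a⁻¹b⁻¹ab = b², and let α, β denote the images of a, b in E. Then: (i) E has cardinality 64; (ii) β² lies in the center of E and in the commutator subgroup of E; (iii) the subgroup generated by α²β² is cyclic of cardinality 8, the subgroup generated by β² has cardinality 2, and these two subgroups intersect trivially; consequently the subgroup ⟨α², β²⟩ generated by α² and β² is the internal direct product ⟨α²β²⟩ × ⟨β²⟩, so the extension 1 → ⟨α²β²⟩ → ⟨α², β²⟩ → ℤ/2ℤ → 1 is split. -/
/-!
The third relation says that `a` inverts `b` by conjugation. Hence `⟨β⟩` is normal, `E = ⟨α⟩⟨β⟩`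
has at most `16 · 4` elements, and `α²` and `β² = β⁻²` commute with both generators. That nothing
collapses further is seen in two quotients: killing `b` maps `E` onto `ℤ/16`, where `α` keeps its
order and `⟨β⟩` dies, and sending `a`, `b` to a reflection and a rotation of the square shows that
`β` has order `4`. In `ℤ/16` the element `α²β²` still has order `8` while `β²` dies, so
`⟨α²β²⟩` and `⟨β²⟩` intersect trivially.
-/

theorem orderOf_eq_of_pow_eq_one_of_orderOf_map {M N : Type*} [Monoid M] [Monoid N] {x : M}
    {n : ℕ} (hx : x ^ n = 1) (f : M →* N) (hf : orderOf (f x) = n) : orderOf x = n :=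
  Nat.dvd_antisymm (orderOf_dvd_of_pow_eq_one hx) (hf ▸ orderOf_map_dvd f x)

section Group

variable {G H : Type*} [Group G] [Group H]

theorem disjoint_zpowers_of_map_eq_one {x y : G} (f : G →* H)
    (hx : orderOf (f x) = orderOf x) (hy : f y = 1) :
    Disjoint (Subgroup.zpowers x) (Subgroup.zpowers y) := by
  rw [Subgroup.disjoint_def]
  rintro _ ⟨k, rfl⟩ hk
  have map_eq_one : f (x ^ k) = 1 :=
    (Subgroup.zpowers_le.2 (f.mem_ker.2 hy) : Subgroup.zpowers y ≤ f.ker) hk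
  rwa [map_zpow, ← orderOf_dvd_iff_zpow_eq_one, hx, orderOf_dvd_iff_zpow_eq_one] at map_eq_one

theorem zpowers_mul_sup_zpowers (x y : G) :
    Subgroup.zpowers (x * y) ⊔ Subgroup.zpowers y = Subgroup.closure {x, y} := by
  have hx : x ∈ Subgroup.closure {x, y} := Subgroup.subset_closure (by simp)
  have hy : y ∈ Subgroup.closure {x, y} := Subgroup.subset_closure (by simp)
  have hxy : x * y ∈ Subgroup.zpowers (x * y) ⊔ Subgroup.zpowers y :=
    Subgroup.mem_sup_left (Subgroup.mem_zpowers _)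
  have hy' : y ∈ Subgroup.zpowers (x * y) ⊔ Subgroup.zpowers y :=
    Subgroup.mem_sup_right (Subgroup.mem_zpowers _)
  apply le_antisymm
  · exact sup_le (Subgroup.zpowers_le.2 (mul_mem hx hy)) (Subgroup.zpowers_le.2 hy)
  · rw [Subgroup.closure_le, Set.pair_subset_iff]
    exact ⟨(Subgroup.mul_mem_cancel_right _ hy').1 hxy, hy'⟩

variable {x y : G}

theorem semiconjBy_inv_iff_commutator_eq_sq : SemiconjBy x y y⁻¹ ↔ x⁻¹ * y⁻¹ * x * y = y ^ 2 := by
  rw [sq, mul_left_inj, mul_assoc, inv_mul_eq_iff_eq_mul, eq_comm, SemiconjBy]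

theorem commute_sq_left_of_semiconjBy_inv (h : SemiconjBy x y y⁻¹) : Commute (x ^ 2) y := by
  rw [sq, commute_iff_eq, ← SemiconjBy]
  simpa only [inv_inv] using h.inv_right.mul_left h

theorem commute_sq_right_of_semiconjBy_inv (h : SemiconjBy x y y⁻¹) (hy : y ^ 4 = 1) :
    Commute x (y ^ 2) := by
  have inv_sq : y⁻¹ ^ 2 = y ^ 2 := by
    rw [inv_pow, inv_eq_iff_mul_eq_one, ← pow_add, hy]
  rw [commute_iff_eq, ← SemiconjBy]
  simpa only [inv_sq] using h.pow_right 2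

open scoped commutatorElement in
theorem sq_mem_commutator_of_semiconjBy_inv (h : SemiconjBy x y y⁻¹) : y ^ 2 ∈ commutator G := by
  have commutator_eq : ⁅x, y⁆ = (y ^ 2)⁻¹ := by
    rw [commutatorElement_def, h.eq, mul_inv_cancel_right, sq, mul_inv_rev]
  rw [← inv_mem_iff, ← commutator_eq]
  exact Subgroup.commutator_mem_commutator (Subgroup.mem_top x) (Subgroup.mem_top y)

theorem normal_zpowers_of_semiconjBy_inv (h : SemiconjBy x y y⁻¹)
    (hG : Subgroup.closure {x, y} = ⊤) : (Subgroup.zpowers y).Normal := by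
  rw [← Subgroup.normalizer_eq_top_iff, eq_top_iff, ← hG, Subgroup.closure_le,
    Set.pair_subset_iff]
  refine ⟨?_, Subgroup.le_normalizer (Subgroup.mem_zpowers y)⟩
  have conj_eq : MulAut.conj x y = y⁻¹ := by
    rw [MulAut.conj_apply, h.eq, mul_inv_cancel_right]
  rw [SetLike.mem_coe, Subgroup.mem_normalizer_iff_map_conj_eq, MonoidHom.map_zpowers]
  simp [conj_eq]

theorem card_eq_orderOf_mul_orderOf [(Subgroup.zpowers y).Normal]
    (hG : Subgroup.closure {x, y} = ⊤)
    (hd : Disjoint (Subgroup.zpowers x) (Subgroup.zpowers y)) :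
    Nat.card G = orderOf x * orderOf y := by
  have sup_eq_top : Subgroup.zpowers x ⊔ Subgroup.zpowers y = ⊤ := by
    rw [← hG, Set.insert_eq, Subgroup.closure_union, Subgroup.zpowers_eq_closure,
      Subgroup.zpowers_eq_closure]
  have complement : (Subgroup.zpowers x).IsComplement' (Subgroup.zpowers y) :=
    Subgroup.isComplement'_of_disjoint_and_mul_eq_univ hd <| by
      rw [← Subgroup.mul_normal, sup_eq_top, Subgroup.coe_top]
  rw [← complement.card_mul_card, Nat.card_zpowers, Nat.card_zpowers]

theorem mem_center_of_closure_eq_top {s : Set G} (hs : Subgroup.closure s = ⊤) {z : G}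
    (hz : ∀ g ∈ s, Commute g z) : z ∈ Subgroup.center G := by
  rw [← Subgroup.centralizer_univ, ← Subgroup.coe_top, ← hs, Subgroup.centralizer_closure]
  exact Subgroup.mem_centralizer_iff.2 hz

end Group

/-- The group `E = ⟨a, b ∣ a¹⁶, b⁴, ⁅a, b⁆b⁻²⟩`, number 44 among the groups of order 64. -/
abbrev G44 : Type := PresentedGroup g44Rels

namespace G44

local notation "α" => PresentedGroup.of (rels := g44Rels) 0
local notation "β" => PresentedGroup.of (rels := g44Rels) 1

theorem α_pow_sixteen : α ^ 16 = 1 :=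
  PresentedGroup.one_of_mem (x := FreeGroup.of 0 ^ 16) (by simp [g44Rels])

theorem β_pow_four : β ^ 4 = 1 :=
  PresentedGroup.one_of_mem (x := FreeGroup.of 1 ^ 4) (by simp [g44Rels])

theorem semiconjBy_α_β : SemiconjBy α β β⁻¹ :=
  semiconjBy_inv_iff_commutator_eq_sq.2 <| PresentedGroup.mk_eq_mk_of_mul_inv_mem (rels := g44Rels)
    (x := (FreeGroup.of 0)⁻¹ * (FreeGroup.of 1)⁻¹ * FreeGroup.of 0 * FreeGroup.of 1)
    (y := FreeGroup.of 1 ^ 2) (by simp [g44Rels])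

theorem closure_α_β : Subgroup.closure {α, β} = ⊤ := by
  rw [← PresentedGroup.closure_range_of g44Rels]
  congr 1
  ext g
  simp [Fin.exists_fin_two, eq_comm]

section Lift

variable {H : Type*} [Group H] {x y : H}

theorem lift_rel_eq_one (hx : x ^ 16 = 1) (hy : y ^ 4 = 1) (h : SemiconjBy x y y⁻¹) :
    ∀ r ∈ g44Rels, FreeGroup.lift ![x, y] r = 1 := by
  rintro _ (rfl | rfl | rfl)
  · simpa using hx
  · simpa using hy
  · simpa [mul_inv_eq_one] using semiconjBy_inv_iff_commutator_eq_sq.1 h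

/-- The universal property of `G44`: the homomorphism sending `a` to `x` and `b` to `y`, with the
commutator relation on `x` and `y` in the form `x * y * x⁻¹ = y⁻¹`. -/
def lift (hx : x ^ 16 = 1) (hy : y ^ 4 = 1) (h : SemiconjBy x y y⁻¹) : G44 →* H :=
  PresentedGroup.toGroup (lift_rel_eq_one hx hy h)

variable (hx : x ^ 16 = 1) (hy : y ^ 4 = 1) (h : SemiconjBy x y y⁻¹)

theorem lift_α : lift hx hy h α = x :=
  PresentedGroup.toGroup.of _

theorem lift_β : lift hx hy h β = y :=
  PresentedGroup.toGroup.of _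

end Lift

/-- The quotient map of `G44` onto `ℤ/16` that kills `b`; it detects powers of `a`. -/
def toZMod : G44 →* Multiplicative (ZMod 16) :=
  lift (x := Multiplicative.ofAdd 1) (y := 1) (by decide) (one_pow 4) (by simp)

theorem toZMod_α : toZMod α = Multiplicative.ofAdd 1 :=
  lift_α _ _ _

theorem toZMod_β : toZMod β = 1 :=
  lift_β _ _ _

/-- The homomorphism from `G44` to the symmetry group of the square that sends `a` to a reflection
and `b` to a rotation of order `4`; it detects powers of `b`. -/
def toDihedral : G44 →* DihedralGroup 4 :=
  lift (x := .sr 0) (y := .r 1) (by decide) (by decide) (by unfold SemiconjBy; decide)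

theorem toDihedral_β : toDihedral β = .r 1 :=
  lift_β _ _ _

theorem orderOf_toZMod_α : orderOf (toZMod α) = 16 := by
  rw [toZMod_α, orderOf_ofAdd_eq_addOrderOf, ZMod.addOrderOf_one]

theorem orderOf_α : orderOf α = 16 :=
  orderOf_eq_of_pow_eq_one_of_orderOf_map α_pow_sixteen toZMod orderOf_toZMod_α

theorem orderOf_β : orderOf β = 4 :=
  orderOf_eq_of_pow_eq_one_of_orderOf_map β_pow_four toDihedral <| by
    rw [toDihedral_β, DihedralGroup.orderOf_r_one]

theorem orderOf_β_sq : orderOf (β ^ 2) = 2 := by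
  rw [orderOf_pow_of_dvd two_ne_zero (by rw [orderOf_β]; norm_num), orderOf_β]

theorem toZMod_β_sq : toZMod (β ^ 2) = 1 := by
  rw [map_pow, toZMod_β, one_pow]

theorem orderOf_toZMod_α_sq_mul_β_sq : orderOf (toZMod (α ^ 2 * β ^ 2)) = 8 := by
  rw [map_mul, toZMod_β_sq, mul_one, map_pow,
    orderOf_pow_of_dvd two_ne_zero (by rw [orderOf_toZMod_α]; norm_num), orderOf_toZMod_α]

theorem orderOf_α_sq_mul_β_sq : orderOf (α ^ 2 * β ^ 2) = 8 := by
  refine orderOf_eq_of_pow_eq_one_of_orderOf_map ?_ toZMod orderOf_toZMod_α_sq_mul_β_sq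
  have commute : Commute (α ^ 2) (β ^ 2) :=
    (commute_sq_left_of_semiconjBy_inv semiconjBy_α_β).pow_right 2
  calc (α ^ 2 * β ^ 2) ^ 8 = α ^ 16 * (β ^ 4) ^ 4 := by
        rw [commute.mul_pow, ← pow_mul, ← pow_mul, ← pow_mul]
    _ = 1 := by rw [α_pow_sixteen, β_pow_four, one_pow, one_mul]

theorem disjoint_zpowers_α_zpowers_β : Disjoint (Subgroup.zpowers α) (Subgroup.zpowers β) :=
  disjoint_zpowers_of_map_eq_one toZMod (orderOf_toZMod_α.trans orderOf_α.symm) toZMod_β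

theorem card_eq : Nat.card G44 = 64 := by
  have := normal_zpowers_of_semiconjBy_inv semiconjBy_α_β closure_α_β
  rw [card_eq_orderOf_mul_orderOf closure_α_β disjoint_zpowers_α_zpowers_β, orderOf_α, orderOf_β]

theorem β_sq_mem_center : β ^ 2 ∈ Subgroup.center G44 := by
  refine mem_center_of_closure_eq_top closure_α_β ?_
  rintro _ (rfl | rfl)
  · exact commute_sq_right_of_semiconjBy_inv semiconjBy_α_β β_pow_four
  · exact Commute.self_pow β 2

theorem disjoint_zpowers_α_sq_mul_β_sq_zpowers_β_sq :
    Disjoint (Subgroup.zpowers (α ^ 2 * β ^ 2)) (Subgroup.zpowers (β ^ 2)) :=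
  disjoint_zpowers_of_map_eq_one toZMod
    (orderOf_toZMod_α_sq_mul_β_sq.trans orderOf_α_sq_mul_β_sq.symm) toZMod_β_sq

end G44

/-- In the presented group `E = ⟨a, b ∣ a¹⁶ = b⁴ = 1, a⁻¹b⁻¹ab = b²⟩` with images
`α, β` of the generators: (i) `E` has order 64; (ii) `β²` is central and lies in the
commutator subgroup; (iii) `⟨α²β²⟩` is cyclic of order 8, `⟨β²⟩` has order 2, they
intersect trivially, and together they generate `⟨α², β²⟩`, so the extension
`1 → ⟨α²β²⟩ → ⟨α², β²⟩ → ℤ/2 → 1` is split. -/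
theorem g44_structure :
    Nat.card (PresentedGroup g44Rels) = 64 ∧
    (PresentedGroup.of (rels := g44Rels) 1) ^ 2 ∈ Subgroup.center (PresentedGroup g44Rels) ∧
    (PresentedGroup.of (rels := g44Rels) 1) ^ 2 ∈ commutator (PresentedGroup g44Rels) ∧
    IsCyclic (Subgroup.zpowers
      ((PresentedGroup.of (rels := g44Rels) 0) ^ 2 * (PresentedGroup.of (rels := g44Rels) 1) ^ 2)) ∧
    Nat.card (Subgroup.zpowers
      ((PresentedGroup.of (rels := g44Rels) 0) ^ 2 * (PresentedGroup.of (rels := g44Rels) 1) ^ 2)) = 8 ∧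
    Nat.card (Subgroup.zpowers ((PresentedGroup.of (rels := g44Rels) 1) ^ 2)) = 2 ∧
    Subgroup.zpowers
        ((PresentedGroup.of (rels := g44Rels) 0) ^ 2 * (PresentedGroup.of (rels := g44Rels) 1) ^ 2) ⊓
      Subgroup.zpowers ((PresentedGroup.of (rels := g44Rels) 1) ^ 2) = ⊥ ∧
    Subgroup.zpowers
        ((PresentedGroup.of (rels := g44Rels) 0) ^ 2 * (PresentedGroup.of (rels := g44Rels) 1) ^ 2) ⊔
      Subgroup.zpowers ((PresentedGroup.of (rels := g44Rels) 1) ^ 2) =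
      Subgroup.closure {(PresentedGroup.of (rels := g44Rels) 0) ^ 2,
        (PresentedGroup.of (rels := g44Rels) 1) ^ 2} := by
  exact ⟨G44.card_eq, G44.β_sq_mem_center,
    sq_mem_commutator_of_semiconjBy_inv G44.semiconjBy_α_β,
    inferInstance,
    (Nat.card_zpowers _).trans G44.orderOf_α_sq_mul_β_sq,
    (Nat.card_zpowers _).trans G44.orderOf_β_sq,
    G44.disjoint_zpowers_α_sq_mul_β_sq_zpowers_β_sq.eq_bot,
    zpowers_mul_sup_zpowers _ _⟩
end

section
/- Let K be a number field of degree 2 over ℚ containing an element α with α² = −21 (i.e. K = ℚ(√−21)). Then the ideal class group of the ring of integers of K is isomorphic to (ℤ/2ℤ) × (ℤ/2ℤ); in particular it has cardinality 4 and exponent 2, so its quotient modulo squares is nontrivial. -/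
/-!
Write `a = √-21`, so that `𝓞 K = ℤ[a]` and `(a - 3) * (a + 3) = -30`. By Minkowski's bound
`(2 / π) * √84 < 6` the class group is generated by the primes of norm at most `5`. Such a prime
contains one of `2`, `3`, `5`, hence also one of `x = a ± 3`, and is therefore `(2, x)`, `(3, x)`
or `(5, x)`. The first two do not depend on the sign, and `(2, x) * (3, x) * (5, x) = (30, x) = (x)`
expresses the class of the third through theirs. For `m ∣ 6` one has `(m, a - 3) ^ 2 = (m)`, so
`(m, a - 3)` could only be principal if `m` were of the form `u ^ 2 + 21 * v ^ 2`, which fails for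
`m = 2, 3, 6`. Hence the classes of `(2, a - 3)` and `(3, a - 3)`, whose product is the class of
`(6, a - 3)`, generate a Klein four-group.
-/

open Ideal Module NumberField nonZeroDivisors

section Groups

theorem isKleinFour_of_closure_pair_eq_top {G : Type*} [CommGroup G] {g h : G}
    (hg : g ^ 2 = 1) (hh : h ^ 2 = 1) (hg1 : g ≠ 1) (hh1 : h ≠ 1) (hgh : g * h ≠ 1)
    (hgen : Subgroup.closure {g, h} = ⊤) : IsKleinFour G := by
  classical
  have zpow_eq {x : G} (hx : x ^ 2 = 1) (n : ℤ) : x ^ n = 1 ∨ x ^ n = x := by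
    obtain ⟨k, rfl | rfl⟩ := n.even_or_odd' <;>
      simp [zpow_add, zpow_mul, show x ^ (2 : ℤ) = 1 from mod_cast hx]
  have eq_or (z : G) : z = 1 ∨ z = g ∨ z = h ∨ z = g * h := by
    obtain ⟨m, n, rfl⟩ := Subgroup.mem_closure_pair.1 (hgen ▸ Subgroup.mem_top z)
    rcases zpow_eq hg m with hm | hm <;> rcases zpow_eq hh n with hn | hn <;> simp [hm, hn]
  have g_ne_h : g ≠ h := by
    rintro rfl
    exact hgh (by rw [← sq, hg])
  have univ_eq : (Set.univ : Set G) = ({1, g, h, g * h} : Finset G) := by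
    ext z
    simpa using eq_or z
  have pow_two_eq_one (z : G) : z ^ 2 = 1 := by
    rcases eq_or z with rfl | rfl | rfl | rfl <;> simp [mul_pow, hg, hh]
  have : Nontrivial G := ⟨g, 1, hg1⟩
  refine ⟨?_, (Monoid.exponent_eq_prime_iff Nat.prime_two).2 fun z hz ↦
    orderOf_eq_prime (pow_two_eq_one z) hz⟩
  rw [← Set.ncard_univ, univ_eq, Set.ncard_coe_finset]
  simp [hg1, hh1, g_ne_h, hg1.symm, hh1.symm, hgh.symm]

theorem isKleinFour_multiplicative_zmod_two_prod :
    IsKleinFour (Multiplicative (ZMod 2) × Multiplicative (ZMod 2)) where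
  card_four := by simp
  exponent_two := by simp [Monoid.exponent_prod]

end Groups

section Ideals

variable {R : Type*} [CommRing R]

theorem span_pair_mul_span_pair_of_isCoprime {m n : R} (h : IsCoprime m n) (x : R) :
    span {m, x} * span {n, x} = span {m * n, x} := by
  obtain ⟨u, v, huv⟩ := h
  rw [span_pair_mul_span_pair]
  apply le_antisymm <;> rw [span_le]
  · rintro _ (rfl | rfl | rfl | rfl)
    all_goals rw [SetLike.mem_coe, mem_span_pair]
    exacts [⟨1, 0, by ring⟩, ⟨0, m, by ring⟩, ⟨0, n, by ring⟩, ⟨0, x, by ring⟩]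
  · refine Set.pair_subset (subset_span (by simp)) ?_
    have hx : u * (m * x) + v * (x * n) = x := by linear_combination x * huv
    have mem : u * (m * x) + v * (x * n) ∈ span {m * n, m * x, x * n, x * x} :=
      add_mem (mul_mem_left _ _ (subset_span (by simp))) (mul_mem_left _ _ (subset_span (by simp)))
    rwa [hx] at mem

theorem span_pair_sq_eq_span_singleton {m x s t : R} (hx : x ^ 2 = m * (s * x + t))
    (ht : IsCoprime m t) : span {m, x} ^ 2 = span {m} := by
  obtain ⟨u, v, huv⟩ := ht
  rw [sq, span_pair_mul_span_pair]
  apply le_antisymm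
  · rw [span_le]
    rintro _ (rfl | rfl | rfl | rfl)
    all_goals rw [SetLike.mem_coe, mem_span_singleton]
    exacts [⟨m, rfl⟩, ⟨x, rfl⟩, ⟨x, by ring⟩, ⟨s * x + t, by rw [← hx, sq]⟩]
  · have hm : u * (m * m) + v * (x * x) - v * s * (m * x) = m := by
      linear_combination m * huv + v * hx
    have mem : u * (m * m) + v * (x * x) - v * s * (m * x) ∈
        span {m * m, m * x, x * m, x * x} :=
      sub_mem (add_mem (mul_mem_left _ _ (subset_span (by simp)))
        (mul_mem_left _ _ (subset_span (by simp)))) (mul_mem_left _ _ (subset_span (by simp)))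
    rwa [hm, ← span_singleton_le_iff_mem] at mem

theorem eq_span_pair_of_adjoin_eq_top {S : Type*} [CommRing S] [Algebra R S] {a : S}
    (ha : Algebra.adjoin R {a} = ⊤) {p c : R} (hp : (span {p}).IsMaximal) {P : Ideal S}
    (hP : P ≠ ⊤) (hpP : algebraMap R S p ∈ P) (hcP : a - algebraMap R S c ∈ P) :
    P = span {algebraMap R S p, a - algebraMap R S c} := by
  refine le_antisymm (fun x hx ↦ ?_) (span_le.2 (Set.pair_subset hpP hcP))
  have comap_eq : span {p} = P.comap (algebraMap R S) :=
    hp.eq_of_le (comap_ne_top _ hP) ((span_singleton_le_iff_mem _).2 hpP)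
  obtain ⟨f, rfl⟩ : ∃ f : Polynomial R, f.aeval a = x := by
    rw [← AlgHom.mem_range, ← Algebra.adjoin_singleton_eq_range_aeval, ha]
    exact Algebra.mem_top
  obtain ⟨y, hy⟩ : a - algebraMap R S c ∣ f.aeval a - algebraMap R S (f.eval c) := by
    simpa [Polynomial.eval_map_algebraMap, Polynomial.aeval_algebraMap_apply] using
      Polynomial.sub_dvd_eval_sub a (algebraMap R S c) (f.map (algebraMap R S))
  have hfc : f.eval c ∈ P.comap (algebraMap R S) := by
    rw [mem_comap, ← sub_sub_self (f.aeval a) (algebraMap R S _), hy]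
    exact sub_mem hx (mul_mem_right _ _ hcP)
  obtain ⟨r, hr⟩ := mem_span_singleton.1 (comap_eq ▸ hfc)
  refine mem_span_pair.2 ⟨algebraMap R S r, y, ?_⟩
  rw [hr, map_mul] at hy
  linear_combination -hy

end Ideals

section ClassGroup

variable {R : Type*} [CommRing R] [IsDedekindDomain R]

theorem mk0_eq_one_of_eq_span_singleton {I : (Ideal R)⁰} {x : R} (h : (I : Ideal R) = span {x}) :
    ClassGroup.mk0 I = 1 :=
  (ClassGroup.mk0_eq_one_iff I.2).2 ⟨x, h⟩

theorem mk0_mem_of_forall_isPrime {H : Subgroup (ClassGroup R)} (I : (Ideal R)⁰)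
    (h : ∀ P : (Ideal R)⁰, (P : Ideal R).IsPrime → (P : Ideal R) ∣ I → ClassGroup.mk0 P ∈ H) :
    ClassGroup.mk0 I ∈ H := by
  obtain ⟨I, hI⟩ := I
  induction I using UniqueFactorizationMonoid.induction_on_prime with
  | h₁ => exact absurd rfl (mem_nonZeroDivisors_iff_ne_zero.1 hI)
  | h₂ I hunit =>
    rw [mk0_eq_one_of_eq_span_singleton (x := 1) (by simpa [isUnit_iff] using hunit)]
    exact one_mem H
  | h₃ I P hI0 hP ih =>
    have hI0' := mem_nonZeroDivisors_of_ne_zero hI0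
    have hP0 := mem_nonZeroDivisors_of_ne_zero hP.ne_zero
    have hmul : (⟨P * I, hI⟩ : (Ideal R)⁰) = ⟨P, hP0⟩ * ⟨I, hI0'⟩ := rfl
    rw [hmul, map_mul]
    exact mul_mem (h ⟨P, hP0⟩ (isPrime_of_prime hP) (dvd_mul_right _ _))
      (ih hI0' fun Q hQ hQI ↦ h Q hQ (hQI.mul_left P))

variable [CharZero R]

/-- The ideal `(m, x)` as a nonzero ideal, so that it has a class in the class group. The first
generator is a natural number so that it is known to be nonzero by instance search. -/
def spanPair (m : ℕ) [NeZero m] (x : R) : (Ideal R)⁰ :=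
  ⟨span {(m : R), x}, mem_nonZeroDivisors_of_ne_zero fun h ↦ by
    have mem : (m : R) ∈ span {(m : R), x} := subset_span (Set.mem_insert _ _)
    exact NeZero.ne m (by simpa [h] using mem)⟩

theorem spanPair_mul_spanPair {m n : ℕ} [NeZero m] [NeZero n] (h : m.Coprime n) (x : R) :
    spanPair m x * spanPair n x = spanPair (m * n) x :=
  Subtype.ext (by simpa [spanPair] using span_pair_mul_span_pair_of_isCoprime h.cast x)

theorem spanPair_sub_intCast_congr {m : ℕ} [NeZero m] {c c' : ℤ} (h : (m : ℤ) ∣ c' - c) (x : R) :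
    spanPair m (x - c) = spanPair m (x - c') := by
  obtain ⟨k, hk⟩ := h
  have hx : x - c = x - c' + k * m := by
    have : (c' - c : R) = m * k := mod_cast congrArg (Int.cast (R := R)) hk
    linear_combination this
  exact Subtype.ext (hx ▸ span_pair_add_mul_left _ _ _)

theorem mk0_spanPair_mul_mul_eq_one {p q r : ℕ} [NeZero p] [NeZero q] [NeZero r]
    (hpq : p.Coprime q) (hpqr : (p * q).Coprime r) {x : R} (hx : x ∣ ((p * q * r : ℕ) : R)) :
    ClassGroup.mk0 (spanPair p x) * ClassGroup.mk0 (spanPair q x) *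
      ClassGroup.mk0 (spanPair r x) = 1 := by
  rw [← map_mul, ← map_mul, spanPair_mul_spanPair hpq, spanPair_mul_spanPair hpqr]
  exact mk0_eq_one_of_eq_span_singleton (span_pair_eq_span_right_iff_dvd.2 hx)

end ClassGroup

section SqrtBasis

variable {R S : Type*} [CommRing R] [CommRing S] [Algebra R S]

/-- `b` is a basis of the form `(1, √d)`: it exhibits `S` as `R[√d]`. -/
structure IsSqrtBasis (b : Basis (Fin 2) R S) (d : R) : Prop where
  zero : b 0 = 1
  one_sq : b 1 ^ 2 = algebraMap R S d

namespace IsSqrtBasis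

variable {b : Basis (Fin 2) R S} {d : R} (hb : IsSqrtBasis b d)
include hb

theorem exists_eq (x : S) : ∃ u v : R, x = algebraMap R S u + v • b 1 := by
  refine ⟨b.repr x 0, b.repr x 1, ?_⟩
  rw [Algebra.algebraMap_eq_smul_one, ← hb.zero, ← Fin.sum_univ_two fun i ↦ b.repr x i • b i,
    b.sum_repr]

theorem adjoin_eq_top : Algebra.adjoin R {b 1} = ⊤ := by
  refine eq_top_iff.2 fun x _ ↦ ?_
  obtain ⟨u, v, rfl⟩ := hb.exists_eq x
  exact add_mem (algebraMap_mem _ u)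
    (Subalgebra.smul_mem _ (Algebra.self_mem_adjoin_singleton R _) v)

theorem leftMulMatrix (u v : R) :
    Algebra.leftMulMatrix b (algebraMap R S u + v • b 1) = !![u, d * v; v, u] := by
  have mul_zero : (algebraMap R S u + v • b 1) * b 0 = u • b 0 + v • b 1 := by
    rw [hb.zero, mul_one, Algebra.algebraMap_eq_smul_one]
  have mul_one : (algebraMap R S u + v • b 1) * b 1 = (d * v) • b 0 + u • b 1 := by
    simp only [hb.zero, Algebra.smul_def, map_mul]
    linear_combination algebraMap R S v * hb.one_sq
  ext i j
  rw [Algebra.leftMulMatrix_eq_repr_mul]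
  fin_cases j <;> fin_cases i <;> simp [mul_zero, mul_one]

theorem trace_eq (u v : R) : Algebra.trace R S (algebraMap R S u + v • b 1) = 2 * u := by
  rw [Algebra.trace_eq_matrix_trace b, hb.leftMulMatrix, Matrix.trace_fin_two_of, two_mul]

theorem norm_eq (u v : R) :
    Algebra.norm R (algebraMap R S u + v • b 1) = u ^ 2 - d * v ^ 2 := by
  rw [Algebra.norm_eq_matrix_det b, hb.leftMulMatrix, Matrix.det_fin_two_of]
  ring

theorem discr_eq : Algebra.discr R b = 4 * d := by
  have trace_algebraMap (r : R) : Algebra.trace R S (algebraMap R S r) = 2 * r := by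
    simpa using hb.trace_eq r 0
  have trace_sqrt : Algebra.trace R S (b 1) = 0 := by simpa using hb.trace_eq 0 1
  have trace_one : Algebra.trace R S 1 = 2 := by simpa using trace_algebraMap 1
  simp only [Algebra.discr_def, Matrix.det_fin_two, Algebra.traceMatrix_apply,
    Algebra.traceForm_apply, hb.zero, mul_one, one_mul, ← sq, one_pow, hb.one_sq,
    trace_algebraMap, trace_sqrt, trace_one]
  ring

end IsSqrtBasis

theorem IsSqrtBasis.exists_abs_norm_eq_of_isPrincipal {S : Type*} [CommRing S] [IsDomain S]
    {b : Basis (Fin 2) ℤ S} {d m : ℤ} (hb : IsSqrtBasis b d) {I : Ideal S}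
    (hI : I ^ 2 = span {(m : S)}) (hprin : I.IsPrincipal) :
    ∃ u v : ℤ, |u ^ 2 - d * v ^ 2| = |m| := by
  obtain ⟨x, rfl⟩ := hprin
  obtain ⟨u, v, rfl⟩ := hb.exists_eq x
  refine ⟨u, v, ?_⟩
  rw [submodule_span_eq, span_singleton_pow, span_singleton_eq_span_singleton] at hI
  have norm_assoc := hI.map (Algebra.norm ℤ)
  rw [map_pow, hb.norm_eq, ← eq_intCast (algebraMap ℤ S), Algebra.norm_algebraMap_of_basis b,
    Fintype.card_fin] at norm_assoc
  rw [← sq_eq_sq_iff_abs_eq_abs]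
  exact Int.eq_of_associated_of_nonneg norm_assoc (sq_nonneg _) (sq_nonneg _)

end SqrtBasis

section RingOfIntegers

theorem exists_intCast_eq_of_squarefree_mul_sq {d : ℤ} (hd : Squarefree d) {q : ℚ} {n : ℤ}
    (h : d * q ^ 2 = n) : ∃ k : ℤ, q = k := by
  have hnum : d * q.num ^ 2 = (q.den : ℤ) ^ 2 * n := by
    rw [← Rat.num_div_den q] at h
    field_simp at h
    exact_mod_cast h
  have hdvd : (q.den : ℤ) * q.den ∣ d := by
    rw [← sq]
    exact q.isCoprime_num_den.symm.pow.dvd_of_dvd_mul_right ⟨n, hnum⟩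
  have hden : q.den = 1 := by simpa [Int.isUnit_iff_natAbs_eq] using hd _ hdvd
  exact ⟨q.num, (Rat.den_eq_one_iff q).1 hden |>.symm⟩

theorem even_and_even_of_four_dvd_sq_sub {d m n : ℤ} (hd : d % 4 = 2 ∨ d % 4 = 3)
    (h : 4 ∣ m ^ 2 - d * n ^ 2) : Even m ∧ Even n := by
  rcases m.even_or_odd' with ⟨m, rfl | rfl⟩ <;> rcases n.even_or_odd' with ⟨n, rfl | rfl⟩
  · simp
  all_goals
    exfalso
    obtain ⟨e, rfl | rfl⟩ : ∃ e, d = 4 * e + 2 ∨ d = 4 * e + 3 := ⟨d / 4, by lia⟩ <;>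
    · ring_nf at h
      omega

theorem exists_intCast_of_two_mul_of_sq_sub {d : ℤ} (hd : Squarefree d)
    (hd4 : d % 4 = 2 ∨ d % 4 = 3) {p q : ℚ} {m k : ℤ} (htr : 2 * p = m)
    (hnm : p ^ 2 - d * q ^ 2 = k) : ∃ u v : ℤ, p = u ∧ q = v := by
  obtain ⟨n, hn⟩ : ∃ n : ℤ, 2 * q = n := exists_intCast_eq_of_squarefree_mul_sq hd
    (n := m ^ 2 - 4 * k) (by push_cast; rw [← htr, ← hnm]; ring)
  have hmn : m ^ 2 - d * n ^ 2 = 4 * k := by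
    have : (m ^ 2 - d * n ^ 2 : ℚ) = 4 * k := by rw [← htr, ← hn, ← hnm]; ring
    exact_mod_cast this
  obtain ⟨⟨u, rfl⟩, ⟨v, rfl⟩⟩ := even_and_even_of_four_dvd_sq_sub hd4 ⟨k, hmn⟩
  push_cast at htr hn
  exact ⟨u, v, by linarith, by linarith⟩

theorem not_isSquare_of_squarefree {d : ℤ} (hd : Squarefree d) (hd1 : d ≠ 1) : ¬ IsSquare d := by
  rintro ⟨r, rfl⟩
  have : IsUnit r := hd r dvd_rfl
  rcases Int.isUnit_iff.1 this with rfl | rfl <;> simp at hd1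

theorem exists_isSqrtBasis_of_not_isSquare {F K : Type*} [Field F] [Field K] [Algebra F K] {d : F}
    (hd : ¬ IsSquare d) (hdeg : finrank F K = 2) {α : K} (hα : α ^ 2 = algebraMap F K d) :
    ∃ b : Basis (Fin 2) F K, IsSqrtBasis b d ∧ b 1 = α := by
  have hli : LinearIndependent F ![1, α] := by
    rw [LinearIndependent.pair_iff' one_ne_zero]
    rintro r rfl
    refine hd ⟨r, (algebraMap F K).injective ?_⟩
    rw [← hα, Algebra.smul_def, mul_one, map_mul, sq]
  exact ⟨basisOfLinearIndependentOfCardEqFinrank hli (by simp [hdeg]),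
    ⟨by simp, by simpa using hα⟩, by simp⟩

variable {K : Type*} [Field K] [NumberField K] {d : ℤ}

theorem exists_intCast_coords_of_isIntegral {B : Basis (Fin 2) ℚ K} (hB : IsSqrtBasis B (d : ℚ))
    (hd : Squarefree d) (hd4 : d % 4 = 2 ∨ d % 4 = 3) {x : K} (hx : IsIntegral ℤ x) :
    ∃ u v : ℤ, x = u + v * B 1 := by
  obtain ⟨p, q, rfl⟩ := hB.exists_eq x
  have htr := Algebra.isIntegral_trace (L := ℚ) hx
  have hnm := Algebra.isIntegral_norm ℚ hx
  rw [hB.trace_eq] at htr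
  rw [hB.norm_eq] at hnm
  obtain ⟨m, hm⟩ := IsIntegrallyClosed.isIntegral_iff.1 htr
  obtain ⟨k, hk⟩ := IsIntegrallyClosed.isIntegral_iff.1 hnm
  obtain ⟨u, v, rfl, rfl⟩ := exists_intCast_of_two_mul_of_sq_sub hd hd4 hm.symm hk.symm
  exact ⟨u, v, by simp [Algebra.smul_def]⟩

theorem exists_isSqrtBasis_ringOfIntegers (hd : Squarefree d) (hd4 : d % 4 = 2 ∨ d % 4 = 3)
    (hdeg : finrank ℚ K = 2) {α : K} (hα : α ^ 2 = d) :
    ∃ b : Basis (Fin 2) ℤ (𝓞 K), IsSqrtBasis b d := by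
  have hsq : ¬ IsSquare (d : ℚ) := by
    rw [Rat.isSquare_intCast_iff]
    exact not_isSquare_of_squarefree hd (by rintro rfl; simp at hd4)
  obtain ⟨B, hB, rfl⟩ := exists_isSqrtBasis_of_not_isSquare hsq hdeg (α := α) (by simpa using hα)
  obtain ⟨a, ha⟩ : ∃ a : 𝓞 K, (a : K) = B 1 :=
    ⟨⟨B 1, .of_pow two_pos (hα ▸ isIntegral_algebraMap (R := ℤ))⟩, rfl⟩
  have hli : LinearIndependent ℤ ![1, a] := by
    refine .of_comp (Algebra.linearMap (𝓞 K) K |>.restrictScalars ℤ) ?_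
    convert B.linearIndependent.restrict_scalars (R := ℤ) ?_
    · ext i
      fin_cases i <;> simp [ha, hB.zero]
    · exact fun m n h ↦ by simpa using h
  have hspan : ⊤ ≤ Submodule.span ℤ (Set.range ![1, a]) := by
    intro x _
    obtain ⟨u, v, huv⟩ := exists_intCast_coords_of_isIntegral hB hd hd4 x.isIntegral_coe
    rw [Matrix.range_cons_cons_empty, Submodule.mem_span_pair]
    exact ⟨u, v, RingOfIntegers.ext (by simp [huv, ha])⟩
  refine ⟨.mk hli hspan, by simp, RingOfIntegers.ext ?_⟩
  simp [ha, hα]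

end RingOfIntegers

section Minkowski

theorem subgroup_eq_top_of_forall_isPrime_absNorm_le {R : Type*} [CommRing R] [IsDedekindDomain R]
    [Module.Free ℤ R] [Module.Finite ℤ R] {B : ℕ}
    (hB : ∀ C : ClassGroup R, ∃ I : (Ideal R)⁰, ClassGroup.mk0 I = C ∧ absNorm (I : Ideal R) ≤ B)
    {H : Subgroup (ClassGroup R)}
    (hH : ∀ P : (Ideal R)⁰, (P : Ideal R).IsPrime → absNorm (P : Ideal R) ≤ B →
      ClassGroup.mk0 P ∈ H) : H = ⊤ := by
  refine eq_top_iff.2 fun C _ ↦ ?_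
  obtain ⟨I, rfl, hI⟩ := hB C
  refine mk0_mem_of_forall_isPrime I fun P hP hPI ↦ hH P hP ?_
  exact (Nat.le_of_dvd (absNorm_pos_of_nonZeroDivisors I) (map_dvd absNorm hPI)).trans hI

variable {K : Type*} [Field K] [NumberField K]

theorem exists_mk0_eq_absNorm_le_of_finrank_eq_two (hdeg : finrank ℚ K = 2)
    (C : ClassGroup (𝓞 K)) :
    ∃ I : (Ideal (𝓞 K))⁰, ClassGroup.mk0 I = C ∧
      absNorm (I : Ideal (𝓞 K)) ≤ 2 / Real.pi * √|discr K| := by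
  obtain ⟨I, hIC, hI⟩ := NumberField.exists_ideal_in_class_of_norm_le C
  refine ⟨I, hIC, hI.trans ?_⟩
  have hplaces : InfinitePlace.nrComplexPlaces K ≤ 1 := by
    have := InfinitePlace.card_add_two_mul_card_eq_rank K
    omega
  have hpow : (4 / Real.pi) ^ InfinitePlace.nrComplexPlaces K ≤ 4 / Real.pi :=
    (pow_le_pow_right₀ ((one_le_div₀ Real.pi_pos).2 Real.pi_le_four) hplaces).trans_eq (pow_one _)
  calc (4 / Real.pi) ^ InfinitePlace.nrComplexPlaces K *
        ((finrank ℚ K).factorial / finrank ℚ K ^ finrank ℚ K * √|discr K|)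
      ≤ 4 / Real.pi * ((finrank ℚ K).factorial / finrank ℚ K ^ finrank ℚ K * √|discr K|) := by
        gcongr
    _ = 2 / Real.pi * √|discr K| := by
        rw [hdeg]
        push_cast [Nat.factorial]
        ring

theorem exists_mk0_eq_absNorm_le_five (hdeg : finrank ℚ K = 2) (hdiscr : |discr K| ≤ 88)
    (C : ClassGroup (𝓞 K)) :
    ∃ I : (Ideal (𝓞 K))⁰, ClassGroup.mk0 I = C ∧ absNorm (I : Ideal (𝓞 K)) ≤ 5 := by
  obtain ⟨I, hIC, hI⟩ := exists_mk0_eq_absNorm_le_of_finrank_eq_two hdeg C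
  refine ⟨I, hIC, Nat.lt_succ_iff.1 (Nat.cast_lt (α := ℝ).1 (hI.trans_lt ?_))⟩
  have hdiscr' : (|discr K| : ℝ) ≤ 88 := mod_cast hdiscr
  have hsqrt : √88 < 9.4 := (Real.sqrt_lt' (by norm_num)).2 (by norm_num)
  calc 2 / Real.pi * √|discr K| ≤ 2 / Real.pi * √88 := by gcongr
    _ < 2 / 3.14 * 9.4 := by gcongr; exact Real.pi_gt_d2
    _ < (6 : ℕ) := by norm_num

end Minkowski

namespace SqrtNeg21

theorem sq_add_twentyOne_mul_sq_ne_of_dvd_six {m : ℕ} (hm : m ∣ 6) (hm1 : m ≠ 1) (u v : ℤ) :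
    u ^ 2 + 21 * v ^ 2 ≠ m := by
  intro h
  have hm6 : m ≤ 6 := Nat.le_of_dvd (by norm_num) hm
  have hv : v = 0 := by
    by_contra hv
    have : 0 < v ^ 2 := by positivity
    nlinarith [sq_nonneg u]
  subst hv
  obtain ⟨hu1, hu2⟩ := abs_lt.1 (abs_lt_of_sq_lt_sq (show u ^ 2 < 3 ^ 2 by lia) (by norm_num))
  have hm_eq : m = 2 ∨ m = 3 ∨ m = 6 := by
    interval_cases m <;> simp_all
  interval_cases u <;> lia

section SpanPairSq

variable {R : Type*} [CommRing R] {b : Basis (Fin 2) ℤ R} (hb : IsSqrtBasis b (-21))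
include hb

theorem sub_three_mul_add_three : (b 1 - 3) * (b 1 + 3) = -30 := by
  have hsq := hb.one_sq
  push_cast [eq_intCast] at hsq
  linear_combination hsq

theorem span_pair_sub_three_sq {m : ℕ} (hm : m ∣ 6) :
    span {(m : R), b 1 - 3} ^ 2 = span {(m : R)} := by
  obtain ⟨s, hs⟩ := hm
  have hcop : m.Coprime (5 * s) := by
    have h30 : 30 = m * (5 * s) := by lia
    exact Nat.coprime_of_squarefree_mul (h30 ▸ by decide +kernel)
  have hsR : (6 : R) = m * s := mod_cast congrArg (Nat.cast (R := R)) hs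
  refine span_pair_sq_eq_span_singleton (s := -s) (t := -(5 * s : ℕ)) ?_ hcop.cast.neg_right
  push_cast
  linear_combination sub_three_mul_add_three hb - (b 1 + 2) * hsR

end SpanPairSq

variable {R : Type*} [CommRing R] [IsDedekindDomain R] [CharZero R]
  {b : Basis (Fin 2) ℤ R} (hb : IsSqrtBasis b (-21))
include hb

theorem mk0_spanPair_sub_three_sq {m : ℕ} [NeZero m] (hm : m ∣ 6) :
    ClassGroup.mk0 (spanPair m (b 1 - 3)) ^ 2 = 1 := by
  rw [← map_pow]
  exact mk0_eq_one_of_eq_span_singleton (span_pair_sub_three_sq hb hm)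

theorem mk0_spanPair_sub_three_ne_one {m : ℕ} [NeZero m] (hm : m ∣ 6) (hm1 : m ≠ 1) :
    ClassGroup.mk0 (spanPair m (b 1 - 3)) ≠ 1 := by
  intro h
  obtain ⟨u, v, huv⟩ := hb.exists_abs_norm_eq_of_isPrincipal (m := m)
    (mod_cast span_pair_sub_three_sq hb hm) ((ClassGroup.mk0_eq_one_iff _).1 h)
  refine sq_add_twentyOne_mul_sq_ne_of_dvd_six hm hm1 u v ?_
  rwa [neg_mul, sub_neg_eq_add, abs_of_nonneg (by positivity), Nat.abs_cast] at huv

theorem exists_eq_spanPair_of_absNorm_le_five [Module.Free ℤ R] {P : (Ideal R)⁰}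
    (hP : (P : Ideal R).IsPrime) (hle : absNorm (P : Ideal R) ≤ 5) :
    ∃ c : ℤ, (c = 3 ∨ c = -3) ∧
      (P = spanPair 2 (b 1 - c) ∨ P = spanPair 3 (b 1 - c) ∨ P = spanPair 5 (b 1 - c)) := by
  have : Module.Finite ℤ R := .of_basis b
  have hpos : 0 < absNorm (P : Ideal R) := absNorm_pos_of_nonZeroDivisors P
  have hdvd : absNorm (P : Ideal R) ∣ 2 * 2 * 3 * 5 := by
    interval_cases absNorm (P : Ideal R) <;> decide
  have h60 : (2 * 2 * 3 * 5 : R) ∈ (P : Ideal R) := by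
    exact_mod_cast mem_of_dvd _ (Nat.cast_dvd_cast hdvd) (absNorm_mem (P : Ideal R))
  have hprime : 2 ∈ (P : Ideal R) ∨ 3 ∈ (P : Ideal R) ∨ 5 ∈ (P : Ideal R) := by
    simpa only [hP.mul_mem_iff_mem_or_mem, or_self, or_assoc] using h60
  have h30 : (b 1 - 3) * (b 1 + 3) ∈ (P : Ideal R) := by
    rw [sub_three_mul_add_three hb, neg_mem_iff, show (30 : R) = 2 * 3 * 5 by norm_num]
    simpa only [hP.mul_mem_iff_mem_or_mem, or_assoc] using hprime
  obtain ⟨c, hc, hcP⟩ : ∃ c : ℤ, (c = 3 ∨ c = -3) ∧ b 1 - c ∈ (P : Ideal R) := by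
    rcases hP.mem_or_mem h30 with h | h
    · exact ⟨3, .inl rfl, by simpa using h⟩
    · exact ⟨-3, .inr rfl, by simpa using h⟩
  have eq_spanPair {p : ℕ} [NeZero p] (hp : p.Prime) (hpP : (p : R) ∈ (P : Ideal R)) :
      P = spanPair p (b 1 - c) := by
    have hmax : (span {(p : ℤ)}).IsMaximal :=
      PrincipalIdealRing.isMaximal_of_irreducible (Nat.prime_iff_prime_int.1 hp).irreducible
    refine Subtype.ext ?_
    simpa [spanPair] using eq_span_pair_of_adjoin_eq_top hb.adjoin_eq_top hmax hP.ne_top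
      (by simpa using hpP) (by simpa using hcP)
  exact ⟨c, hc, hprime.imp (fun h ↦ eq_spanPair Nat.prime_two (mod_cast h))
    (.imp (fun h ↦ eq_spanPair Nat.prime_three (mod_cast h))
      fun h ↦ eq_spanPair Nat.prime_five (mod_cast h))⟩

theorem mk0_mem_closure_of_absNorm_le_five [Module.Free ℤ R] {P : (Ideal R)⁰}
    (hP : (P : Ideal R).IsPrime) (hle : absNorm (P : Ideal R) ≤ 5) :
    ClassGroup.mk0 P ∈ Subgroup.closure
      {ClassGroup.mk0 (spanPair 2 (b 1 - 3)), ClassGroup.mk0 (spanPair 3 (b 1 - 3))} := by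
  set H := Subgroup.closure
    {ClassGroup.mk0 (spanPair 2 (b 1 - 3)), ClassGroup.mk0 (spanPair 3 (b 1 - 3))}
  obtain ⟨c, hc, hPc⟩ := exists_eq_spanPair_of_absNorm_le_five hb hP hle
  have mem_two : ClassGroup.mk0 (spanPair 2 (b 1 - c)) ∈ H := by
    rw [spanPair_sub_intCast_congr (c' := 3) (by lia), Int.cast_ofNat]
    exact Subgroup.subset_closure (by simp)
  have mem_three : ClassGroup.mk0 (spanPair 3 (b 1 - c)) ∈ H := by
    rw [spanPair_sub_intCast_congr (c' := 3) (by lia), Int.cast_ofNat]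
    exact Subgroup.subset_closure (by simp)
  have hdvd : b 1 - c ∣ ((2 * 3 * 5 : ℕ) : R) := by
    have := sub_three_mul_add_three hb
    rcases hc with rfl | rfl
    · exact ⟨-(b 1 + 3), by push_cast; linear_combination this⟩
    · exact ⟨-(b 1 - 3), by push_cast; linear_combination this⟩
  have mul_eq_one := mk0_spanPair_mul_mul_eq_one (by norm_num) (by norm_num) hdvd
  rcases hPc with rfl | rfl | rfl
  · exact mem_two
  · exact mem_three
  · rw [eq_inv_of_mul_eq_one_right mul_eq_one]
    exact inv_mem (mul_mem mem_two mem_three)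

theorem isKleinFour_classGroup_of_forall_exists_absNorm_le_five [Module.Free ℤ R]
    (hB : ∀ C : ClassGroup R, ∃ I : (Ideal R)⁰,
      ClassGroup.mk0 I = C ∧ absNorm (I : Ideal R) ≤ 5) :
    IsKleinFour (ClassGroup R) := by
  have : Module.Finite ℤ R := .of_basis b
  refine isKleinFour_of_closure_pair_eq_top (mk0_spanPair_sub_three_sq hb (m := 2) (by norm_num))
    (mk0_spanPair_sub_three_sq hb (m := 3) (by norm_num))
    (mk0_spanPair_sub_three_ne_one hb (by norm_num) (by norm_num))
    (mk0_spanPair_sub_three_ne_one hb (by norm_num) (by norm_num)) ?_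
    (subgroup_eq_top_of_forall_isPrime_absNorm_le hB fun P hP hle ↦
      mk0_mem_closure_of_absNorm_le_five hb hP hle)
  rw [← map_mul, spanPair_mul_spanPair (by norm_num)]
  exact mk0_spanPair_sub_three_ne_one hb (by norm_num) (by norm_num)

end SqrtNeg21

/-- The ideal class group of `K = ℚ(√−21)` is isomorphic to `(ℤ/2ℤ) × (ℤ/2ℤ)`; in
particular it has cardinality 4 and exponent 2. -/
theorem classGroup_sqrt_neg21
    (K : Type*) [Field K] [NumberField K]
    (hdeg : Module.finrank ℚ K = 2) (α : K) (hα : α ^ 2 = -21) :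
    Nonempty (ClassGroup (NumberField.RingOfIntegers K) ≃*
      (Multiplicative (ZMod 2) × Multiplicative (ZMod 2))) ∧
    Nat.card (ClassGroup (NumberField.RingOfIntegers K)) = 4 ∧
    Monoid.exponent (ClassGroup (NumberField.RingOfIntegers K)) = 2 := by
  have squarefree_neg21 : Squarefree (-21 : ℤ) := by
    rw [← Int.squarefree_natAbs]
    decide +kernel
  obtain ⟨b, hb⟩ := exists_isSqrtBasis_ringOfIntegers squarefree_neg21 (by norm_num) hdeg
    (α := α) (mod_cast hα)
  have hdiscr : |discr K| ≤ 88 := by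
    rw [← discr_eq_discr K b, hb.discr_eq]
    norm_num
  have isKleinFour_classGroup : IsKleinFour (ClassGroup (𝓞 K)) :=
    SqrtNeg21.isKleinFour_classGroup_of_forall_exists_absNorm_le_five hb
      (exists_mk0_eq_absNorm_le_five hdeg hdiscr)
  have := isKleinFour_multiplicative_zmod_two_prod
  exact ⟨IsKleinFour.nonempty_mulEquiv, isKleinFour_classGroup.card_four,
    isKleinFour_classGroup.exponent_two⟩
end
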